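/- arXiv:1111.2387 — 2 statements merged into one kernel-verified Lean document; each statement's English description precedes it below -/
import Mathlib

section
/- Let H be an irreducible Hopf superalgebra of finite dimension over a field k of positive characteristic p > 2. Then the following are equivalent: (i) H is semisimple as an algebra; (ii) H is purely even, and commutative semisimple as an algebra; (iii) the base extension of H to the algebraic closure of k is isomorphic to the function algebra of some finite p-group; (iv) the Lie superalgebra P(H) of primitives is purely even and is a torus, in the sense that P(H) is abelian as a Lie algebra and every element of P(H) generates a semisimple subalgebra of H. -/
/-!
Irreducibility of `H` means that the filtration `F₀ = k·1`,
`F₍ₙ₊₁₎ = {h | Δ h - h ⊗ 1 - 1 ⊗ h ∈ Fₙ ⊗ Fₙ}` exhausts `H` (`exists_filt_eq_top`): the dual algebra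
has nilpotent augmentation ideal.  Consequently functionals with value `1` at `1` are invertible
for convolution.

Both (i) and (iv) provide an element `Λ` with `ε(Λ) = 1` killed by all primitives: in case (i) an
integral, in case (iv) a product of integrals of the commuting semisimple subalgebras generated by
the primitives.  Everything else follows from the existence of `Λ`.

* `vanish_of_integral` shows, by playing convolution inverses against `Λ`, that a nilpotent
  primitive is zero and (after a study of the minimal polynomial of `v²`) that an odd primitive `v`
  is zero.  By induction along the filtration `H` is purely even (`isPurelyEven`), hence an ordinary
  bialgebra.
* The situation passes to the algebraic closure, because primitives are the kernel of a linear map.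
  There the `p`-th power map is injective on primitives, and since it stays injective on tensor
  squares of commuting subspaces, induction along the filtration makes it injective on every
  commutative subbialgebra (`frobenius_injOn`).  Hence the elements of such a subbialgebra act
  semisimply by commutators.  This forces primitives to commute with each other
  (`primitive_comm`), and then, again by induction along the filtration, the whole algebra is
  commutative (`mul_comm_of_filt`) and reduced.
* A finite-dimensional commutative reduced algebra over an algebraically closed field is the algebra
  of functions on its characters.  Here these form a group of exponent a power of `p`, since `g - 1`
  is convolution-nilpotent for each character `g` (`exists_group`).

Conversely, function algebras and their subalgebras are reduced, so finite-dimensional ones are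
semisimple.
-/

open TensorProduct CategoryTheory

noncomputable section

/-- A Hopf superalgebra over a field `k` (with `char k ≠ 2`), presented as an
algebra together with even/odd projection operators encoding the `ℤ₂`-grading,
and comultiplication, counit and antipode satisfying the axioms of a
Hopf-algebra object in the symmetric tensor category of super-vector spaces
(the Koszul sign rule being encoded via the odd projections; this encoding is
faithful since `char k ≠ 2`). -/
structure HopfSuperalgebra (k : Type) [Field k] : Type 1 where
  carrier : Type
  [ring : Ring carrier]
  [alg : Algebra k carrier]
  /-- the projection onto the even part -/
  pe : carrier →ₗ[k] carrier
  /-- the projection onto the odd part -/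
  po : carrier →ₗ[k] carrier
  pe_add_po : ∀ a, pe a + po a = a
  pe_po : ∀ a, pe (po a) = 0
  po_pe : ∀ a, po (pe a) = 0
  mul_even_even : ∀ a b, po a = 0 → po b = 0 → po (a * b) = 0
  mul_even_odd : ∀ a b, po a = 0 → pe b = 0 → pe (a * b) = 0
  mul_odd_even : ∀ a b, pe a = 0 → po b = 0 → pe (a * b) = 0
  mul_odd_odd : ∀ a b, pe a = 0 → pe b = 0 → po (a * b) = 0
  one_even : po 1 = 0
  comul : carrier →ₗ[k] carrier ⊗[k] carrier
  counit : carrier →ₗ[k] k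
  antipode : carrier →ₗ[k] carrier
  comul_even : ∀ a, po a = 0 →
    comul a = TensorProduct.map pe pe (comul a) + TensorProduct.map po po (comul a)
  comul_odd : ∀ a, pe a = 0 →
    comul a = TensorProduct.map pe po (comul a) + TensorProduct.map po pe (comul a)
  counit_odd : ∀ a, pe a = 0 → counit a = 0
  antipode_pe : ∀ a, antipode (pe a) = pe (antipode a)
  coassoc : ∀ a, (TensorProduct.assoc k carrier carrier carrier)
      ((TensorProduct.map comul LinearMap.id) (comul a)) =
      (TensorProduct.map LinearMap.id comul) (comul a)
  counit_comul : ∀ a,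
    (TensorProduct.lid k carrier) ((TensorProduct.map counit LinearMap.id) (comul a)) = a
  comul_counit : ∀ a,
    (TensorProduct.rid k carrier) ((TensorProduct.map LinearMap.id counit) (comul a)) = a
  comul_one : comul 1 = 1 ⊗ₜ[k] 1
  /-- `Δ` is an algebra map for the super (sign-twisted) multiplication of
  `A ⊗ A`: since `(a⊗b)·(c⊗d) = (-1)^{|b||c|} ac ⊗ bd`, the sign twist amounts
  to the correction term `-2·((1⊗po)Δa)·((po⊗1)Δb)`. -/
  comul_mul : ∀ a b, comul (a * b) =
      comul a * comul b -
        (2 : k) • ((TensorProduct.map LinearMap.id po) (comul a) *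
          (TensorProduct.map po LinearMap.id) (comul b))
  counit_one : counit 1 = 1
  counit_mul : ∀ a b, counit (a * b) = counit a * counit b
  antipode_comul : ∀ a, (LinearMap.mul' k carrier)
      ((TensorProduct.map antipode LinearMap.id) (comul a)) = algebraMap k carrier (counit a)
  comul_antipode : ∀ a, (LinearMap.mul' k carrier)
      ((TensorProduct.map LinearMap.id antipode) (comul a)) = algebraMap k carrier (counit a)

attribute [instance] HopfSuperalgebra.ring HopfSuperalgebra.alg

namespace HopfSuperalgebra

variable {k : Type} [Field k] (H : HopfSuperalgebra k)

/-- super-commutativity: even elements are central, odd elements anticommute. -/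
def IsSuperCommutative : Prop :=
  (∀ a b : H.carrier, H.po a = 0 → a * b = b * a) ∧
  (∀ a b : H.carrier, H.pe a = 0 → H.pe b = 0 → a * b = -(b * a))

/-- the super-symmetry `c(v ⊗ w) = (-1)^{|v||w|} w ⊗ v` on `H ⊗ H`. -/
def superSwap : H.carrier ⊗[k] H.carrier →ₗ[k] H.carrier ⊗[k] H.carrier :=
  (TensorProduct.comm k H.carrier H.carrier).toLinearMap ∘ₗ
    (LinearMap.id - (2 : k) • TensorProduct.map H.po H.po)

def IsSuperCocommutative : Prop := ∀ a, H.superSwap (H.comul a) = H.comul a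

/-- the primitive elements `{u | Δu = 1⊗u + u⊗1}`. -/
def primitives : Submodule k H.carrier :=
  LinearMap.ker (H.comul -
    ((TensorProduct.mk k H.carrier H.carrier) 1 +
      (TensorProduct.mk k H.carrier H.carrier).flip 1))

def IsPurelyEven : Prop := ∀ a, H.po a = 0

/-- the convolution product of two linear functionals on `H`. -/
def conv (f g : H.carrier →ₗ[k] k) : H.carrier →ₗ[k] k :=
  LinearMap.mul' k k ∘ₗ TensorProduct.map f g ∘ₗ H.comul

/-- the largest purely even subcoalgebra `H̲ = Δ⁻¹(H₀ ⊗ H₀)`. -/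
def underline : Submodule k H.carrier :=
  Submodule.comap H.comul (LinearMap.range
    (TensorProduct.map (LinearMap.ker H.po).subtype (LinearMap.ker H.po).subtype))

/-- the odd primitives `V_H = P(H)₁`. -/
def oddPrimitives : Submodule k H.carrier := H.primitives ⊓ LinearMap.ker H.pe

end HopfSuperalgebra

/-- A subspace `D` of a coalgebra with comultiplication `Δ` is a subcoalgebra
if `Δ(D) ⊆ D ⊗ D`. -/
def IsSubcoalgebraOf {k M : Type} [Field k] [AddCommGroup M] [Module k M]
    (Δ : M →ₗ[k] M ⊗[k] M) (D : Submodule k M) : Prop :=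
  ∀ a ∈ D, Δ a ∈ LinearMap.range (TensorProduct.map D.subtype D.subtype)

/-- The coradical of a coalgebra: the sum of all its simple subcoalgebras. -/
def coradicalOf {k M : Type} [Field k] [AddCommGroup M] [Module k M]
    (Δ : M →ₗ[k] M ⊗[k] M) : Submodule k M :=
  sSup {D | IsSubcoalgebraOf Δ D ∧ D ≠ ⊥ ∧
    ∀ E : Submodule k M, E ≤ D → IsSubcoalgebraOf Δ E → E = ⊥ ∨ E = D}

namespace HopfSuperalgebra

variable {k : Type} [Field k] (H : HopfSuperalgebra k)

/-- a Hopf superalgebra is irreducible if its coradical is `k·1`. -/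
def IsIrreducible : Prop := coradicalOf H.comul = Submodule.span k {(1 : H.carrier)}

/-- cosemisimplicity: the coradical is everything; equivalently all
super-comodules are semisimple, i.e. `SSp H` is linearly reductive. -/
def IsCosemisimple : Prop := coradicalOf H.comul = (⊤ : Submodule k H.carrier)

/-- connectedness of `Spec A₀`: the only even idempotents are `0` and `1`. -/
def IsConnected : Prop :=
  ∀ a : H.carrier, H.po a = 0 → a * a = a → a = 0 ∨ a = 1

/-- Morphisms of Hopf superalgebras. -/
@[ext]
structure Hom (H K : HopfSuperalgebra k) : Type where
  toLinearMap : H.carrier →ₗ[k] K.carrier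
  map_one' : toLinearMap 1 = 1
  map_mul' : ∀ a b, toLinearMap (a * b) = toLinearMap a * toLinearMap b
  map_pe' : ∀ a, toLinearMap (H.pe a) = K.pe (toLinearMap a)
  map_comul' : ∀ a, K.comul (toLinearMap a) =
    TensorProduct.map toLinearMap toLinearMap (H.comul a)
  map_counit' : ∀ a, K.counit (toLinearMap a) = H.counit a

instance : Category (HopfSuperalgebra k) where
  Hom A B := Hom A B
  id A :=
    { toLinearMap := LinearMap.id
      map_one' := rfl
      map_mul' := fun _ _ => rfl
      map_pe' := fun _ => rfl
      map_comul' := fun a => by simp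
      map_counit' := fun _ => rfl }
  comp {X Y Z} f g :=
    { toLinearMap := g.toLinearMap ∘ₗ f.toLinearMap
      map_one' := by simp [f.map_one', g.map_one']
      map_mul' := fun a b => by simp [f.map_mul', g.map_mul']
      map_pe' := fun a => by simp [f.map_pe', g.map_pe']
      map_comul' := fun a => by
        simp only [LinearMap.coe_comp, Function.comp_apply, g.map_comul', f.map_comul',
          TensorProduct.map_comp, LinearMap.comp_apply]
      map_counit' := fun a => by simp [f.map_counit', g.map_counit'] }
  id_comp f := by apply Hom.ext; rfl
  comp_id f := by apply Hom.ext; rfl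
  assoc f g h := by apply Hom.ext; rfl

end HopfSuperalgebra

/-! ### The conilpotency filtration -/

namespace IrrHopf

open Coalgebra WithConv

section Filtration

variable {K B : Type*} [Field K] [Ring B] [Algebra K B]

/-- The subspace `D ⊗ D` of `B ⊗ B`. -/
def tsq (D : Submodule K B) : Submodule K (B ⊗[K] B) :=
  LinearMap.range (TensorProduct.map D.subtype D.subtype)

theorem tmul_mem_tsq {D : Submodule K B} {a b : B} (ha : a ∈ D) (hb : b ∈ D) :
    a ⊗ₜ[K] b ∈ tsq D :=
  ⟨(⟨a, ha⟩ : D) ⊗ₜ (⟨b, hb⟩ : D), by simp⟩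

theorem tsq_le {D : Submodule K B} {S : Submodule K (B ⊗[K] B)}
    (h : ∀ a ∈ D, ∀ b ∈ D, a ⊗ₜ[K] b ∈ S) : tsq D ≤ S := by
  rintro _ ⟨t, rfl⟩
  induction t with
  | zero => simp
  | tmul x y => simpa using h _ x.2 _ y.2
  | add x y hx hy => rw [map_add]; exact S.add_mem hx hy

theorem tsq_mono {D E : Submodule K B} (h : D ≤ E) : tsq D ≤ tsq E :=
  tsq_le fun _ ha _ hb => tmul_mem_tsq (h ha) (h hb)

/-- The functional `f ⊗ g` on `B ⊗ B`. -/
def pair (f g : B →ₗ[K] K) : B ⊗[K] B →ₗ[K] K :=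
  LinearMap.mul' K K ∘ₗ TensorProduct.map f g

@[simp] theorem pair_tmul (f g : B →ₗ[K] K) (a b : B) : pair f g (a ⊗ₜ b) = f a * g b := by
  simp [pair]

/-- Product functionals separate the points of `B ⊗ B`. -/
theorem eq_zero_of_pair {z : B ⊗[K] B} (h : ∀ f g : B →ₗ[K] K, pair f g z = 0) : z = 0 := by
  -- product functionals include the coordinates of a basis of `B ⊗ B`
  let b := Module.Basis.ofVectorSpace K B
  apply (b.tensorProduct b).repr.injective
  ext ⟨i, j⟩
  have key : (b.tensorProduct b).coord (i, j) = pair (b.coord i) (b.coord j) := by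
    apply TensorProduct.ext'
    intro x y
    simp [Module.Basis.tensorProduct_repr_tmul_apply, mul_comm]
  have := h (b.coord i) (b.coord j)
  rw [← key] at this
  simpa using this

/-- An element lies in `D ⊗ D` as soon as it is killed by every functional that vanishes on `D`
in one of the two legs. -/
theorem mem_tsq_of_pair {D : Submodule K B} {z : B ⊗[K] B}
    (h : ∀ f g : B →ₗ[K] K, (∀ d ∈ D, f d = 0) → pair f g z = 0 ∧ pair g f z = 0) :
    z ∈ tsq D := by
  -- with `e` a projection onto `D`, it suffices to see that `z = (e ⊗ e) z`
  obtain ⟨q, hq⟩ := D.exists_isCompl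
  let e' := D.projectionOnto q hq
  let e : B →ₗ[K] B := D.subtype ∘ₗ e'
  have he : ∀ d ∈ D, e d = d := fun d hd => by
    have := Submodule.projectionOnto_apply_left hq ⟨d, hd⟩
    simpa [e, e'] using congrArg Subtype.val this
  have hz : z = TensorProduct.map e e z := by
    rw [← sub_eq_zero]
    apply eq_zero_of_pair
    intro f g
    have h1 : pair f g (TensorProduct.map e e z) = pair (f ∘ₗ e) (g ∘ₗ e) z := by
      have : pair f g ∘ₗ TensorProduct.map e e = pair (f ∘ₗ e) (g ∘ₗ e) := by
        apply TensorProduct.ext'; intros; simp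
      exact LinearMap.congr_fun this z
    have h2 : pair f g = pair (f - f ∘ₗ e) g + pair (f ∘ₗ e) (g - g ∘ₗ e)
        + pair (f ∘ₗ e) (g ∘ₗ e) := by
      apply TensorProduct.ext'
      intro x y
      simp
      ring
    have h3 := (h (f - f ∘ₗ e) g (fun d hd => by simp [he d hd])).1
    have h4 := (h (g - g ∘ₗ e) (f ∘ₗ e) (fun d hd => by simp [he d hd])).2
    rw [map_sub, h1, h2]
    simp [h3, h4]
  rw [hz]
  refine ⟨TensorProduct.map e' e' z, ?_⟩
  change _ = TensorProduct.map (D.subtype ∘ₗ e') (D.subtype ∘ₗ e') z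
  rw [TensorProduct.map_comp]; rfl

theorem pair_eq_zero_of_mem_tsq {D : Submodule K B} {z : B ⊗[K] B} (hz : z ∈ tsq D)
    {f g : B →ₗ[K] K} (h : ∀ d ∈ D, f d = 0) : pair f g z = 0 ∧ pair g f z = 0 := by
  have h1 : tsq D ≤ LinearMap.ker (pair f g) ⊓ LinearMap.ker (pair g f) :=
    tsq_le fun a ha b hb => by simp [h a ha, h b hb]
  simpa using h1 hz

/-- `(D ⊗ D) ∩ (E ⊗ E) = (D ∩ E) ⊗ (D ∩ E)`. -/
theorem mem_tsq_inf [FiniteDimensional K B] {D E : Submodule K B} {z : B ⊗[K] B}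
    (hD : z ∈ tsq D) (hE : z ∈ tsq E) : z ∈ tsq (D ⊓ E) := by
  apply mem_tsq_of_pair
  intro f g hf
  have hf' : f ∈ (D ⊓ E).dualAnnihilator := by
    rw [Submodule.mem_dualAnnihilator]; exact hf
  rw [Subspace.dualAnnihilator_inf_eq, Submodule.mem_sup] at hf'
  obtain ⟨f1, h1, f2, h2, rfl⟩ := hf'
  rw [Submodule.mem_dualAnnihilator] at h1 h2
  have a := pair_eq_zero_of_mem_tsq hD (g := g) h1
  have b := pair_eq_zero_of_mem_tsq hE (g := g) h2
  have c : pair (f1 + f2) g = pair f1 g + pair f2 g := by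
    apply TensorProduct.ext'; intros; simp [add_mul]
  have d : pair g (f1 + f2) = pair g f1 + pair g f2 := by
    apply TensorProduct.ext'; intros; simp [mul_add]
  rw [c, d]
  simp [a, b]

variable [Coalgebra K B]

variable (K B) in
/-- The defect `δ h = Δ h - h ⊗ 1 - 1 ⊗ h` from primitivity. -/
def del : B →ₗ[K] B ⊗[K] B :=
  comul - (TensorProduct.mk K B B).flip 1 - TensorProduct.mk K B B 1

theorem del_apply (h : B) : del K B h = comul (R := K) h - h ⊗ₜ[K] 1 - 1 ⊗ₜ[K] h := rfl

theorem comul_eq_del (h : B) : comul (R := K) h = del K B h + h ⊗ₜ[K] 1 + 1 ⊗ₜ[K] h := by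
  rw [del_apply]; abel

variable (K B) in
/-- The conilpotency filtration: `F₀ = K·1`, and `F₍ₙ₊₁₎` consists of the `h` with
`Δ h - h ⊗ 1 - 1 ⊗ h ∈ Fₙ ⊗ Fₙ`.  For an irreducible coalgebra it is the coradical filtration. -/
def filt : ℕ → Submodule K B
  | 0 => Submodule.span K {1}
  | n + 1 => Submodule.comap (del K B) (tsq (filt n))

variable (h1 : comul (R := K) (1 : B) = 1 ⊗ₜ[K] 1)

theorem one_mem_filt_zero : (1 : B) ∈ filt K B 0 := Submodule.mem_span_singleton_self 1

include h1 in
theorem filt_succ_le (n : ℕ) : filt K B n ≤ filt K B (n + 1) := by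
  induction n with
  | zero =>
    change Submodule.span K {1} ≤ _
    rw [Submodule.span_singleton_le_iff_mem]
    change del K B 1 ∈ tsq (filt K B 0)
    rw [del_apply, h1, sub_self, zero_sub]
    exact Submodule.neg_mem _ (tmul_mem_tsq one_mem_filt_zero one_mem_filt_zero)
  | succ n ih => exact Submodule.comap_mono (tsq_mono ih)

include h1 in
theorem filt_mono : Monotone (filt K B) := monotone_nat_of_le_succ (filt_succ_le h1)

include h1 in
theorem one_mem_filt (n : ℕ) : (1 : B) ∈ filt K B n :=
  filt_mono h1 (Nat.zero_le n) one_mem_filt_zero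

include h1 in
/-- The members of the filtration are subcoalgebras. -/
theorem comul_mem_tsq_filt {n : ℕ} {h : B} (hh : h ∈ filt K B n) :
    comul (R := K) h ∈ tsq (filt K B n) := by
  cases n with
  | zero =>
    obtain ⟨c, rfl⟩ := Submodule.mem_span_singleton.1 hh
    rw [map_smul, h1]
    exact Submodule.smul_mem _ _ (tmul_mem_tsq one_mem_filt_zero one_mem_filt_zero)
  | succ n =>
    rw [comul_eq_del]
    have : del K B h ∈ tsq (filt K B n) := hh
    exact add_mem (add_mem (tsq_mono (filt_succ_le h1 n) this)
      (tmul_mem_tsq hh (one_mem_filt h1 _))) (tmul_mem_tsq (one_mem_filt h1 _) hh)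

/-- The `(n+1)`-st convolution power of a functional vanishing at `1` vanishes on `Fₙ`. -/
theorem conv_pow_eq_zero {L : Type*} [CommRing L] [Algebra K L] (g : WithConv (B →ₗ[K] L))
    (hg : g 1 = 0) (h1 : comul (R := K) (1 : B) = 1 ⊗ₜ[K] 1)
    (n : ℕ) {h : B} (hh : h ∈ filt K B n) : (g ^ (n + 1)) h = 0 := by
  induction n generalizing h with
  | zero =>
    obtain ⟨c, rfl⟩ := Submodule.mem_span_singleton.1 hh
    simp [hg]
  | succ n ih =>
    rw [pow_succ, LinearMap.convMul_apply, comul_eq_del]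
    have ha : LinearMap.mul' K L (TensorProduct.map (g ^ (n + 1)).ofConv g.ofConv (del K B h)) = 0 := by
      have : tsq (filt K B n) ≤
          LinearMap.ker (LinearMap.mul' K L ∘ₗ TensorProduct.map (g ^ (n + 1)).ofConv g.ofConv) :=
        tsq_le fun a ha b hb => by simp [ih ha]
      exact this hh
    have hb : (g ^ (n + 1)) 1 = 0 := ih (one_mem_filt h1 n)
    simp only [map_add, ha, TensorProduct.map_tmul, LinearMap.mul'_apply, hg, hb]
    simp

theorem conv_isNilpotent {L : Type*} [CommRing L] [Algebra K L] (g : WithConv (B →ₗ[K] L))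
    (hg : g 1 = 0) (h1 : comul (R := K) (1 : B) = 1 ⊗ₜ[K] 1)
    {N : ℕ} (hN : filt K B N = ⊤) : g ^ (N + 1) = 0 := by
  ext h
  exact conv_pow_eq_zero g hg h1 N (by rw [hN]; trivial)

/-- The convolution algebra of functionals is local: a functional with value `1` at `1` is
invertible. -/
theorem conv_isUnit (w : WithConv (B →ₗ[K] K))
    (hw : w 1 = 1) (h1 : comul (R := K) (1 : B) = 1 ⊗ₜ[K] 1) (hε : counit (R := K) (1 : B) = 1)
    {N : ℕ} (hN : filt K B N = ⊤) : IsUnit w := by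
  have : IsNilpotent (1 - w) := ⟨N + 1, conv_isNilpotent _ (by
    change (1 : WithConv (B →ₗ[K] K)) 1 - w 1 = 0
    simp [hw, hε]) h1 hN⟩
  simpa using this.isUnit_one_sub

end Filtration

end IrrHopf

/-! ### Irreducible coalgebras are conilpotent -/

namespace IrrHopf
open Coalgebra WithConv

/-- A semisimple ring with an augmentation has a normalised left integral. -/
theorem exists_integral {R K : Type*} [Ring R] [IsSemisimpleRing R] [Field K] (ε : R →+* K) :
    ∃ Λ : R, ε Λ = 1 ∧ ∀ h, ε h = 0 → h * Λ = 0 := by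
  obtain ⟨Q, hQ⟩ := exists_isCompl (RingHom.ker ε : Ideal R)
  have h1 : (1 : R) ∈ RingHom.ker ε ⊔ Q := by rw [hQ.sup_eq_top]; trivial
  obtain ⟨a, ha, b, hb, hab⟩ := Submodule.mem_sup.1 h1
  refine ⟨b, ?_, fun h hh => ?_⟩
  · have := congrArg ε hab
    rw [map_add, map_one, (RingHom.mem_ker).1 ha, zero_add] at this
    exact this
  · have h2 : h * b ∈ RingHom.ker ε ⊓ Q :=
      ⟨(RingHom.mem_ker).2 (by rw [map_mul, hh, zero_mul]), Q.smul_mem h hb⟩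
    rw [hQ.inf_eq_bot] at h2
    exact h2

section Abstract

variable {K A : Type*} [Field K] [Ring A] [Algebra K A] [FiniteDimensional K A] (ε : A →ₐ[K] K)

include ε in
/-- If every proper two-sided ideal of a finite-dimensional augmented algebra lies in the
augmentation ideal, then the augmentation ideal lies in the Jacobson radical. -/
theorem mem_jacobson
    (hsub : ∀ I : Submodule K A, (∀ f g, g ∈ I → f * g ∈ I) → (∀ f g, f ∈ I → f * g ∈ I) →
      (∀ f, f ∈ I) ∨ ∀ f ∈ I, ε f = 0) (f : A) (hf : ε f = 0) :
    f ∈ Ring.jacobson A := by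
  have : IsArtinianRing A := isArtinian_of_tower K (inferInstance : IsArtinian K A)
  obtain ⟨n, hn⟩ := IsSemiprimaryRing.isNilpotent (R := A)
  set J := Ring.jacobson A with hJ
  have : IsSemisimpleRing (A ⧸ J) := IsSemiprimaryRing.isSemisimpleRing
  have hk : ∀ a ∈ J, (ε : A →+* K) a = 0 := by
    intro a ha
    have h2 : a ^ n ∈ J ^ n := Ideal.pow_mem_pow ha n
    rw [hn] at h2
    have h3 : a ^ n = 0 := h2
    have h4 := congrArg (ε : A →+* K) h3
    rw [map_pow, map_zero] at h4
    exact eq_zero_of_pow_eq_zero h4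
  let ε' := Ideal.Quotient.lift J (ε : A →+* K) hk
  obtain ⟨Λ, hΛ, hΛ'⟩ := exists_integral ε'
  let π := Ideal.Quotient.mk J
  obtain ⟨l, rfl⟩ := Ideal.Quotient.mk_surjective Λ
  have hz : ∀ h, ε h = 0 → π h * π l = 0 := fun h hh => hΛ' (π h) hh
  -- the preimage of the right ideal generated by the integral is two-sided, since the integral
  -- absorbs left multiplications up to scalars
  let I : Submodule K A :=
    { carrier := {x | ∃ r, π x = π (l * r)}
      add_mem' := by
        rintro a b ⟨r, hr⟩ ⟨s, hs⟩
        exact ⟨r + s, by rw [map_add, hr, hs, mul_add, map_add]⟩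
      zero_mem' := ⟨0, by simp⟩
      smul_mem' := by
        rintro c a ⟨r, hr⟩
        refine ⟨c • r, ?_⟩
        rw [mul_smul_comm, Algebra.smul_def, Algebra.smul_def, map_mul, hr, ← map_mul] }
  have hI := hsub I
    (by
      rintro f g ⟨r, hr⟩
      refine ⟨ε f • r, ?_⟩
      have h5 : ε (f - algebraMap K A (ε f)) = 0 := by simp
      have h6 := hz _ h5
      rw [map_sub, sub_mul, sub_eq_zero] at h6
      rw [map_mul, hr, map_mul, ← mul_assoc, h6, ← map_mul, ← map_mul, mul_smul_comm,
        Algebra.smul_def, mul_assoc])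
    (by
      rintro f g ⟨r, hr⟩
      exact ⟨r * g, by rw [map_mul, hr, ← map_mul, mul_assoc]⟩)
  rcases hI with hI | hI
  · obtain ⟨r, hr⟩ := hI 1
    rw [← Ideal.Quotient.eq_zero_iff_mem]
    change π f = 0
    have h7 : π f = π f * π 1 := by rw [map_one, mul_one]
    rw [h7, hr, map_mul, ← mul_assoc, hz f hf, zero_mul]
  · have h8 := hI l ⟨1, by rw [mul_one]⟩
    have h9 : ε' (π l) = ε l := rfl
    rw [h9, h8] at hΛ
    exact absurd hΛ zero_ne_one

include ε in
/-- Under the same hypothesis the augmentation ideal is nilpotent; `M n` is its `(n+1)`-st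
power. -/
theorem exists_powers
    (hsub : ∀ I : Submodule K A, (∀ f g, g ∈ I → f * g ∈ I) → (∀ f g, f ∈ I → f * g ∈ I) →
      (∀ f, f ∈ I) ∨ ∀ f ∈ I, ε f = 0) :
    ∃ (M : ℕ → Submodule K A) (N : ℕ), (∀ f, ε f = 0 → f ∈ M 0) ∧
      (∀ n, ∀ a ∈ M n, ∀ b, ε b = 0 → a * b ∈ M (n + 1) ∧ b * a ∈ M (n + 1)) ∧ M N = ⊥ := by
  have : IsArtinianRing A := isArtinian_of_tower K (inferInstance : IsArtinian K A)
  obtain ⟨N, hN⟩ := IsSemiprimaryRing.isNilpotent (R := A)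
  let m : Submodule K A := LinearMap.ker ε.toLinearMap
  have hmJ : ∀ n, ∀ x ∈ m ^ n, x ∈ (Ring.jacobson A) ^ n := by
    intro n
    induction n with
    | zero => intro x _; rw [Submodule.pow_zero, Ideal.one_eq_top]; trivial
    | succ n ih =>
      intro x hx
      rw [pow_succ] at hx
      induction hx using Submodule.mul_induction_on' with
      | mem_mul_mem a ha b hb =>
        rw [Submodule.pow_succ]
        exact Ideal.mul_mem_mul (ih a ha) (mem_jacobson ε hsub b hb)
      | add x _ y _ hx hy => exact add_mem hx hy
  refine ⟨fun n => m ^ (n + 1), N, fun f hf => ?_, fun n a ha b hb => ⟨?_, ?_⟩, ?_⟩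
  · change f ∈ m ^ (0 + 1)
    rw [zero_add, pow_one]
    exact hf
  · change a * b ∈ m ^ (n + 1 + 1)
    rw [pow_succ]
    exact Submodule.mul_mem_mul ha hb
  · change b * a ∈ m ^ (n + 1 + 1)
    rw [pow_succ']
    exact Submodule.mul_mem_mul hb ha
  · rw [eq_bot_iff]
    intro f hf
    have h2 := hmJ _ f hf
    rw [Submodule.pow_succ, hN] at h2
    simpa using h2

end Abstract

section Conil

variable {K B : Type*} [Field K] [Ring B] [Algebra K B] [Coalgebra K B] [FiniteDimensional K B]

omit [FiniteDimensional K B] in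
theorem conv_apply (f g : WithConv (B →ₗ[K] K)) (h : B) :
    (f * g) h = pair f.ofConv g.ofConv (comul h) := rfl

omit [Coalgebra K B] in
/-- A functional vanishing on the common zeros of a subspace of the dual belongs to it. -/
theorem mem_of_vanish (I : Submodule K (WithConv (B →ₗ[K] K))) (f : WithConv (B →ₗ[K] K))
    (hf : ∀ h : B, (∀ g ∈ I, g h = 0) → f h = 0) : f ∈ I := by
  let e := WithConv.linearEquiv K (B →ₗ[K] K)
  let W : Subspace K (Module.Dual K B) := I.map e.toLinearMap
  have hW : f.ofConv ∈ W.dualCoannihilator.dualAnnihilator := by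
    rw [Submodule.mem_dualAnnihilator]
    intro h hh
    rw [Submodule.mem_dualCoannihilator] at hh
    exact hf h fun g hg => hh _ ⟨g, hg, rfl⟩
  rw [Subspace.dualCoannihilator_dualAnnihilator_eq] at hW
  obtain ⟨g, hg, hgf⟩ := hW
  have : g = f := WithConv.ofConv_injective hgf
  exact this ▸ hg

/-- Two-sided ideals of the dual algebra annihilate subcoalgebras, so if every nonzero subcoalgebra
contains `1`, a proper ideal of the dual algebra consists of functionals vanishing at `1`. -/
theorem ideal_eq_top_or (hsub : ∀ D : Submodule K B, (∀ a ∈ D, comul (R := K) a ∈ tsq D) →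
      D ≠ ⊥ → (1 : B) ∈ D)
    (I : Submodule K (WithConv (B →ₗ[K] K)))
    (hl : ∀ f g, g ∈ I → f * g ∈ I) (hr : ∀ f g, f ∈ I → f * g ∈ I) :
    (∀ f, f ∈ I) ∨ ∀ f ∈ I, f 1 = 0 := by
  let D : Submodule K B :=
    { carrier := {h | ∀ f ∈ I, f h = 0}
      add_mem' := fun {a b} ha hb f hf => by
        have := ha f hf; have := hb f hf; simp_all
      zero_mem' := fun f _ => by simp
      smul_mem' := fun c a ha f hf => by have := ha f hf; simp_all }
  by_cases hD : D = ⊥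
  · left
    intro f
    refine mem_of_vanish I f fun h hh => ?_
    have : h ∈ D := hh
    rw [hD, Submodule.mem_bot] at this
    simp [this]
  · right
    refine hsub D (fun h hh => ?_) hD
    apply mem_tsq_of_pair
    intro f g hf
    have hf' : toConv f ∈ I := mem_of_vanish I _ hf
    exact ⟨hh _ (hr _ (toConv g) hf'), hh _ (hl (toConv g) _ hf')⟩

omit [Coalgebra K B] in
theorem finite_conv : FiniteDimensional K (WithConv (B →ₗ[K] K)) :=
  Module.Finite.equiv (WithConv.linearEquiv K (B →ₗ[K] K)).symm

variable (h1 : comul (R := K) (1 : B) = 1 ⊗ₜ[K] 1) (hε : counit (R := K) (1 : B) = 1)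

/-- Evaluation at the grouplike `1`, as a character of the dual algebra. -/
def evOne : WithConv (B →ₗ[K] K) →ₐ[K] K :=
  AlgHom.ofLinearMap
    { toFun := fun f => f 1
      map_add' := fun _ _ => rfl
      map_smul' := fun _ _ => rfl }
    (by change counit (R := K) (1 : B) = 1; exact hε)
    (fun f g => by change (f * g) 1 = f 1 * g 1; rw [conv_apply, h1, pair_tmul])

include h1 hε in
/-- An irreducible coalgebra is conilpotent: its coradical filtration is exhaustive. -/
theorem exists_filt_eq_top (hsub : ∀ D : Submodule K B, (∀ a ∈ D, comul (R := K) a ∈ tsq D) →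
      D ≠ ⊥ → (1 : B) ∈ D) : ∃ N, filt K B N = ⊤ := by
  have := finite_conv (K := K) (B := B)
  obtain ⟨M, N, hM0, hM, hN⟩ := exists_powers (evOne h1 hε) (ideal_eq_top_or hsub)
  -- the annihilator of the `(n+1)`-st power of the augmentation ideal lies in `Fₙ`
  have key : ∀ n, ∀ h : B, (∀ f ∈ M n, f h = 0) → h ∈ filt K B n := by
    intro n
    induction n with
    | zero =>
      intro h hh
      change h ∈ Submodule.span K {(1 : B)}
      by_contra hc
      obtain ⟨f, hf, hf'⟩ := Submodule.exists_le_ker_of_notMem hc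
      exact hf (hh (toConv f) (hM0 _ (hf' (Submodule.mem_span_singleton_self _))))
    | succ n ih =>
      intro h hh
      change del K B h ∈ tsq _
      have aux : ∀ f : B →ₗ[K] K, (∀ d ∈ filt K B n, f d = 0) → toConv f ∈ M n :=
        fun f hf => mem_of_vanish _ _ fun h hh => hf h (ih h hh)
      have auxg : ∀ g : B →ₗ[K] K,
          evOne h1 hε (toConv g - g 1 • (1 : WithConv (B →ₗ[K] K))) = 0 := by
        intro g
        change g 1 - g 1 • counit (R := K) (1 : B) = 0
        simp [hε]
      apply mem_tsq_of_pair
      intro f g hf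
      have hf1 : f 1 = 0 := hf _ (one_mem_filt h1 n)
      constructor
      · have h2 := hh _ (hM n _ (aux f hf) _ (auxg g)).1
        rw [mul_sub, mul_smul_comm, mul_one] at h2
        have h3 : pair f g (comul h) - g 1 * f h = 0 := h2
        rw [del_apply, map_sub, map_sub, pair_tmul, pair_tmul, hf1]
        linear_combination h3
      · have h2 := hh _ (hM n _ (aux f hf) _ (auxg g)).2
        rw [sub_mul, smul_mul_assoc, one_mul] at h2
        have h3 : pair g f (comul h) - g 1 * f h = 0 := h2
        rw [del_apply, map_sub, map_sub, pair_tmul, pair_tmul, hf1]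
        linear_combination h3
  refine ⟨N, eq_top_iff.2 fun h _ => key N h fun f hf => ?_⟩
  rw [hN, Submodule.mem_bot] at hf
  rw [hf]; rfl

/-- Every nonzero subcoalgebra of a finite-dimensional coalgebra with coradical `K·1`
contains `1`. -/
theorem one_mem_of_coradical {K B : Type} [Field K] [Ring B] [Algebra K B]
    [FiniteDimensional K B] (Δ : B →ₗ[K] B ⊗[K] B)
    (hirr : coradicalOf Δ = Submodule.span K {(1 : B)})
    (D : Submodule K B) (hD : ∀ a ∈ D, Δ a ∈ tsq D) (hne : D ≠ ⊥) : (1 : B) ∈ D := by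
  obtain ⟨E, ⟨hE1, hE2, hE3⟩, hmin⟩ := IsWellFounded.wf.has_min (r := (· < ·))
    {E : Submodule K B | IsSubcoalgebraOf Δ E ∧ E ≠ ⊥ ∧ E ≤ D} ⟨D, hD, hne, le_rfl⟩
  have hle : E ≤ Submodule.span K {(1 : B)} := by
    rw [← hirr]
    refine le_sSup ⟨hE1, hE2, fun F hF hF' => ?_⟩
    by_contra hc
    push Not at hc
    exact hmin F ⟨hF', hc.1, hF.trans hE3⟩ (lt_of_le_of_ne hF hc.2)
  obtain ⟨x, hx, hx0⟩ := (Submodule.ne_bot_iff E).1 hE2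
  obtain ⟨c, rfl⟩ := Submodule.mem_span_singleton.1 (hle hx)
  have hc : c ≠ 0 := by rintro rfl; simp at hx0
  have := E.smul_mem c⁻¹ hx
  rw [smul_smul, inv_mul_cancel₀ hc, one_smul] at this
  exact hE3 this

end Conil
end IrrHopf

/-! ### Odd primitives -/

namespace IrrHopf
open Coalgebra WithConv

section LemmaA

variable {K B : Type*} [Field K] [Ring B] [Algebra K B] [Coalgebra K B] [FiniteDimensional K B]

/-- Let `u` be (skew-)primitive, in the sense that `Δ(uh) = (u ⊗ 1) Δh + (σ ⊗ u·) Δh`, and let `Λ`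
have counit `1`. If `l u = 0` and `l Λ = 0`, then `l = 0`, provided `l` can be moved to the second
leg against functionals vanishing on `u B`.

Otherwise pick `x` with `x(l) = 1`. Then `w = x(l ·)` has a convolution inverse `a`. As
`(w * a)(u h) = ε(u h) = 0` and `w` vanishes on `u B`, cancelling the unit `w ∘ σ` shows that `a`
vanishes on `u B`. Hence `0 = (b * x)(l Λ) = (a * w)(Λ) = ε(Λ) = 1`. -/
theorem vanish_of_integral (h1 : comul (R := K) (1 : B) = 1 ⊗ₜ[K] 1)
    (hε : counit (R := K) (1 : B) = 1) {N : ℕ} (hN : filt K B N = ⊤)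
    (u l Λ : B) (σ : B →ₗ[K] B) (hσ : σ 1 = 1)
    (hu : ∀ h, comul (R := K) (u * h) =
      TensorProduct.map (LinearMap.mulLeft K u) LinearMap.id (comul (R := K) h) +
      TensorProduct.map σ (LinearMap.mulLeft K u) (comul (R := K) h))
    (hεu : ∀ h, counit (R := K) (u * h) = 0) (hlu : l * u = 0) (hlΛ : l * Λ = 0)
    (hΛ : counit (R := K) Λ = 1)
    (h2 : ∀ a : B →ₗ[K] K, (∀ h, a (u * h) = 0) → ∃ b : B →ₗ[K] K, ∀ (x : B →ₗ[K] K) (h : B),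
      pair b x (comul (l * h)) = pair a (x ∘ₗ LinearMap.mulLeft K l) (comul h)) :
    l = 0 := by
  by_contra hl
  obtain ⟨x, hx⟩ := Module.Projective.exists_dual_ne_zero K hl
  obtain ⟨x, hx⟩ : ∃ x : B →ₗ[K] K, x l = 1 := ⟨(x l)⁻¹ • x, by simp [hx]⟩
  let w : B →ₗ[K] K := x ∘ₗ LinearMap.mulLeft K l
  have hw : IsUnit (toConv w) := conv_isUnit _ (by simp [w, hx]) h1 hε hN
  have hwσ : IsUnit (toConv (w ∘ₗ σ)) := conv_isUnit _ (by simp [w, hx, hσ]) h1 hε hN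
  obtain ⟨a, hwa, haw⟩ := isUnit_iff_exists.1 hw
  have ha : toConv (w ∘ₗ σ) * toConv (a.ofConv ∘ₗ LinearMap.mulLeft K u) = 0 := by
    ext h
    have e1 : (toConv w * a) (u * h) = 0 := by
      rw [hwa]; exact hεu h
    have e2 : (toConv w * a) (u * h) = pair w a.ofConv (comul (u * h)) := rfl
    have e3 : pair w a.ofConv ∘ₗ TensorProduct.map (LinearMap.mulLeft K u) LinearMap.id = 0 := by
      apply TensorProduct.ext'; intro y z
      simp [w, ← mul_assoc, hlu]
    have e4 : pair w a.ofConv ∘ₗ TensorProduct.map σ (LinearMap.mulLeft K u)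
        = pair (w ∘ₗ σ) (a.ofConv ∘ₗ LinearMap.mulLeft K u) := by
      apply TensorProduct.ext'; intro y z; simp
    rw [e2, hu, map_add] at e1
    have e5 := LinearMap.congr_fun e3 (comul h)
    have e6 := LinearMap.congr_fun e4 (comul h)
    rw [LinearMap.comp_apply] at e5 e6
    rw [e5, e6, LinearMap.zero_apply, zero_add] at e1
    exact e1
  have ha' : toConv (a.ofConv ∘ₗ LinearMap.mulLeft K u) = 0 := by
    rwa [hwσ.mul_right_eq_zero] at ha
  obtain ⟨b, hb⟩ := h2 a.ofConv fun h => by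
    have := congrArg (fun f : WithConv (B →ₗ[K] K) => f h) ha'
    simpa using this
  have e1 := hb x Λ
  rw [hlΛ, map_zero, map_zero] at e1
  have e2 : pair a.ofConv (x ∘ₗ LinearMap.mulLeft K l) (comul Λ) = (a * toConv w) Λ := rfl
  rw [e2, haw] at e1
  exact zero_ne_one (e1.trans hΛ)

end LemmaA

section Super

variable {k : Type} [Field k] (H : HopfSuperalgebra k)

/-- The coalgebra underlying a Hopf superalgebra. -/
@[reducible] def coalg : Coalgebra k H.carrier where
  comul := H.comul
  counit := H.counit
  coassoc := LinearMap.ext H.coassoc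
  rTensor_counit_comp_comul := by
    ext a
    apply (TensorProduct.lid k H.carrier).injective
    simpa [LinearMap.rTensor] using H.counit_comul a
  lTensor_counit_comp_comul := by
    ext a
    apply (TensorProduct.rid k H.carrier).injective
    simpa [LinearMap.lTensor] using H.comul_counit a

attribute [local instance] coalg

theorem mem_primitives {u : H.carrier} :
    u ∈ H.primitives ↔ H.comul u = u ⊗ₜ 1 + 1 ⊗ₜ u := by
  rw [HopfSuperalgebra.primitives, LinearMap.mem_ker, LinearMap.sub_apply, sub_eq_zero]
  simp [add_comm]

variable {H}

theorem pe_eq (a : H.carrier) : H.pe a = a - H.po a := by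
  rw [eq_sub_iff_add_eq, H.pe_add_po]

theorem po_po (a : H.carrier) : H.po (H.po a) = H.po a := by
  have := H.pe_add_po (H.po a)
  rwa [H.pe_po, zero_add] at this

theorem pe_pe (a : H.carrier) : H.pe (H.pe a) = H.pe a := by
  rw [pe_eq (H.pe a), H.po_pe, sub_zero]

theorem po_odd_mul {v : H.carrier} (hv : H.pe v = 0) (h : H.carrier) :
    H.po (v * h) = v * H.pe h := by
  have h1 : H.pe (v * H.pe h) = 0 := H.mul_odd_even _ _ hv (H.po_pe h)
  have h2 : H.po (v * H.po h) = 0 := H.mul_odd_odd _ _ hv (H.pe_po h)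
  have h3 := H.pe_add_po (v * H.pe h)
  rw [h1, zero_add] at h3
  conv_lhs => rw [← H.pe_add_po h, mul_add, map_add, h2, h3, add_zero]

/-- The parity automorphism. -/
def sg (H : HopfSuperalgebra k) : H.carrier →ₗ[k] H.carrier := LinearMap.id - (2 : k) • H.po

theorem sg_apply (a : H.carrier) : sg H a = a - (2 : k) • H.po a := rfl

theorem sg_sg (a : H.carrier) : sg H (sg H a) = a := by
  simp only [sg_apply, map_sub, map_smul, po_po]
  module

theorem sg_one : sg H 1 = 1 := by simp [sg_apply, H.one_even]

theorem sg_odd_mul {v : H.carrier} (hv : H.pe v = 0) (h : H.carrier) :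
    sg H (v * h) = - (v * sg H h) := by
  rw [sg_apply, sg_apply, po_odd_mul hv, pe_eq, mul_sub, mul_sub, mul_smul_comm]
  module

theorem sg_odd {v : H.carrier} (hv : H.pe v = 0) : sg H v = -v := by
  simpa [sg_one] using sg_odd_mul hv 1

theorem comul_odd_mul {v : H.carrier} (hv : H.pe v = 0) (hp : v ∈ H.primitives) (h : H.carrier) :
    H.comul (v * h) =
      TensorProduct.map (LinearMap.mulLeft k v) LinearMap.id (H.comul h) +
      TensorProduct.map (sg H) (LinearMap.mulLeft k v) (H.comul h) := by
  have hpo : H.po v = v := by rw [← H.pe_add_po v, hv, zero_add, po_po]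
  rw [H.comul_mul, (mem_primitives H).1 hp]
  generalize H.comul h = z
  induction z with
  | zero => simp
  | add x y hx hy =>
    rw [(TensorProduct.map (sg H) (LinearMap.mulLeft k v)).map_add,
      (TensorProduct.map (LinearMap.mulLeft k v) LinearMap.id).map_add,
      (TensorProduct.map H.po LinearMap.id).map_add, mul_add, mul_add,
      smul_add, add_sub_add_comm, hx, hy]
    abel
  | tmul a b =>
    simp only [TensorProduct.map_tmul, LinearMap.mulLeft_apply, LinearMap.id_apply, map_add, hpo,
      H.one_even, add_mul, Algebra.TensorProduct.tmul_mul_tmul, one_mul, sg_apply,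
      TensorProduct.sub_tmul, TensorProduct.smul_tmul', TensorProduct.tmul_zero,
      zero_add]
    rw [← TensorProduct.smul_tmul']
    abel

/-- The square of an odd primitive is primitive: the cross terms cancel by the sign rule. -/
theorem comul_sq_mul {v : H.carrier} (hv : H.pe v = 0) (hp : v ∈ H.primitives) (h : H.carrier) :
    H.comul (v ^ 2 * h) = ((v ^ 2) ⊗ₜ 1 + 1 ⊗ₜ (v ^ 2)) * H.comul h := by
  rw [pow_two, mul_assoc, comul_odd_mul hv hp, comul_odd_mul hv hp]
  generalize H.comul h = z
  induction z with
  | zero => simp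
  | add x y hx hy =>
    simp only [map_add, mul_add] at hx hy ⊢
    rw [← hx, ← hy]
    abel
  | tmul a b =>
    simp only [TensorProduct.map_tmul, LinearMap.mulLeft_apply, LinearMap.id_apply, map_add,
      add_mul, Algebra.TensorProduct.tmul_mul_tmul, one_mul, sg_odd_mul hv, sg_sg,
      TensorProduct.neg_tmul, mul_assoc]
    abel

theorem comul_aeval_mul {v : H.carrier} (hv : H.pe v = 0) (hp : v ∈ H.primitives)
    (q : Polynomial k) (h : H.carrier) :
    H.comul (Polynomial.aeval (v ^ 2) q * h) =
      Polynomial.aeval ((v ^ 2) ⊗ₜ[k] (1 : H.carrier) + 1 ⊗ₜ (v ^ 2)) q * H.comul h := by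
  induction q using Polynomial.induction_on' with
  | add p q hp hq => simp only [map_add, add_mul, hp, hq]
  | monomial n c =>
    simp only [Polynomial.aeval_monomial, ← Algebra.smul_def, smul_mul_assoc, map_smul]
    congr 1
    induction n generalizing h with
    | zero => simp
    | succ n ih => rw [pow_succ (v ^ 2), mul_assoc, ih, comul_sq_mul hv hp, pow_succ _ n, mul_assoc]

/-- An odd primitive `v` with `q(v²) v = 0`, where `X q` is the minimal polynomial of `v²`,
vanishes: compare coefficients in `Δ (q(v²) v) = 0`. -/
theorem odd_eq_zero_of_aeval [FiniteDimensional k H.carrier] {v : H.carrier} (hv : H.pe v = 0)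
    (hp : v ∈ H.primitives) (q : Polynomial k) (hq : minpoly k (v ^ 2) = Polynomial.X * q)
    (h0 : Polynomial.aeval (v ^ 2) q * v = 0) : v = 0 := by
  set u := v ^ 2 with hu
  have hmonic : (Polynomial.X * q).Monic := by
    rw [← hq]; exact minpoly.monic (Algebra.IsIntegral.isIntegral u)
  have hqm : q.Monic := by
    rw [Polynomial.Monic, Polynomial.leadingCoeff_mul, Polynomial.leadingCoeff_X, one_mul] at hmonic
    exact hmonic
  set e := q.natDegree with he
  have hdeg : (minpoly k u).natDegree = e + 1 := by
    rw [hq, Polynomial.natDegree_X_mul hqm.ne_zero]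
  -- a functional singling out `u ^ e` among the powers `u ^ j`, `j ≤ e`
  have hli := linearIndependent_pow (K := k) u
  have hnot : u ^ e ∉ Submodule.span k ((fun i : Fin (minpoly k u).natDegree => u ^ (i : ℕ)) ''
      {i | (i : ℕ) < e}) := by
    have := hli.notMem_span_image (s := {i | (i : ℕ) < e}) (x := ⟨e, by omega⟩) (by simp)
    simpa using this
  obtain ⟨φ, hφ, hφ'⟩ := Submodule.exists_le_ker_of_notMem hnot
  have hφ0 : ∀ j < e, φ (u ^ j) = 0 := fun j hj =>
    hφ' (Submodule.subset_span ⟨⟨j, by omega⟩, hj, rfl⟩)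
  set w := u ⊗ₜ[k] (1 : H.carrier) + 1 ⊗ₜ u with hw
  have hc : Polynomial.aeval w q * (v ⊗ₜ[k] 1 + 1 ⊗ₜ v) = 0 := by
    rw [← (mem_primitives H).1 hp, ← comul_aeval_mul hv hp, h0, map_zero]
  have hpow : ∀ n, H.po (u ^ n) = 0 := by
    intro n
    induction n with
    | zero => rw [pow_zero]; exact H.one_even
    | succ n ih =>
      rw [pow_succ]
      exact H.mul_even_even _ _ ih (by rw [hu, pow_two]; exact H.mul_odd_odd _ _ hv hv)
  have hpowv : ∀ n, H.po (u ^ n * v) = u ^ n * v := by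
    intro n
    have := H.pe_add_po (u ^ n * v)
    rwa [H.mul_even_odd _ _ (hpow n) hv, zero_add] at this
  have hcomm : Commute (u ⊗ₜ[k] (1 : H.carrier)) (1 ⊗ₜ u) := by
    simp [Commute, SemiconjBy, Algebra.TensorProduct.tmul_mul_tmul]
  have hwn : ∀ n, w ^ n = ∑ m ∈ Finset.range (n + 1),
      (n.choose m) • ((u ^ m) ⊗ₜ[k] (u ^ (n - m))) := by
    intro n
    rw [hw, hcomm.add_pow]
    refine Finset.sum_congr rfl fun m _ => ?_
    rw [Algebra.TensorProduct.tmul_pow, Algebra.TensorProduct.tmul_pow, one_pow, one_pow,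
      Algebra.TensorProduct.tmul_mul_tmul, one_mul, mul_one, nsmul_eq_mul, Nat.cast_comm]
  let Ψ : H.carrier ⊗[k] H.carrier →ₗ[k] H.carrier :=
    (TensorProduct.rid k H.carrier).toLinearMap ∘ₗ TensorProduct.map H.po φ
  have hΨ : ∀ n ≤ e, Ψ (w ^ n * (v ⊗ₜ[k] 1 + 1 ⊗ₜ v)) = if n = e then φ (u ^ e) • v else 0 := by
    intro n hn
    rw [hwn, Finset.sum_mul, map_sum, Finset.sum_eq_single 0]
    · simp only [Nat.choose_zero_right, one_smul, pow_zero, Nat.sub_zero, mul_add,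
        Algebra.TensorProduct.tmul_mul_tmul, one_mul, mul_one]
      have hpo : H.po v = v := by simpa using hpowv 0
      simp only [Ψ, map_add, LinearMap.comp_apply, TensorProduct.map_tmul, hpo, H.one_even,
        LinearEquiv.coe_coe, TensorProduct.rid_tmul, smul_zero, add_zero]
      split_ifs with h
      · rw [h]
      · rw [hφ0 n (by omega), zero_smul]
    · intro m hm hm0
      have hm' := Finset.mem_range.1 hm
      rw [smul_mul_assoc, map_nsmul, mul_add, Algebra.TensorProduct.tmul_mul_tmul,
        Algebra.TensorProduct.tmul_mul_tmul, mul_one, mul_one]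
      simp only [Ψ, map_add, LinearMap.comp_apply, TensorProduct.map_tmul, hpow,
        LinearEquiv.coe_coe, TensorProduct.rid_tmul, smul_zero, add_zero]
      rw [hφ0 (n - m) (by omega), zero_smul, smul_zero]
    · simp
  have hfin := congrArg Ψ hc
  rw [map_zero, Polynomial.aeval_eq_sum_range, Finset.sum_mul, map_sum,
    Finset.sum_eq_single_of_mem e (by simp [he])] at hfin
  · have hce : q.coeff e = 1 := hqm.coeff_natDegree
    rw [smul_mul_assoc, map_smul, hΨ e le_rfl, if_pos rfl, hce, one_smul] at hfin
    exact (smul_eq_zero.1 hfin).resolve_left hφ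
  · intro n hn hne
    have : n < q.natDegree + 1 := Finset.mem_range.1 hn
    rw [smul_mul_assoc, map_smul, hΨ n (by omega), if_neg hne, smul_zero]

/-- Odd primitives annihilating an element `Λ` of counit `1` vanish. With `X q` the minimal
polynomial of `v²`, apply `vanish_of_integral` to `l = q(v²) v` and conclude by
`odd_eq_zero_of_aeval`. -/
theorem odd_primitive_eq_zero [FiniteDimensional k H.carrier] {N : ℕ}
    (hN : filt k H.carrier N = ⊤) {Λ : H.carrier} (hΛ : H.counit Λ = 1)
    {v : H.carrier} (hv : H.pe v = 0) (hp : v ∈ H.primitives) (hvΛ : v * Λ = 0) : v = 0 := by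
  let ε : H.carrier →ₐ[k] k := AlgHom.ofLinearMap H.counit H.counit_one H.counit_mul
  have hεv : H.counit v = 0 := H.counit_odd v hv
  have hX : Polynomial.X ∣ minpoly k (v ^ 2) := by
    rw [Polynomial.X_dvd_iff]
    have h1 := congrArg ε (minpoly.aeval k (v ^ 2))
    rw [map_zero, ← Polynomial.aeval_algHom_apply, map_pow] at h1
    have h2 : ε v = 0 := hεv
    rw [h2] at h1
    simpa [Polynomial.aeval_def] using h1
  obtain ⟨q, hq⟩ := hX
  have hqu : Polynomial.aeval (v ^ 2) q * v ^ 2 = 0 := by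
    have := minpoly.aeval k (v ^ 2)
    rw [hq, mul_comm, map_mul, Polynomial.aeval_X] at this
    exact this
  refine odd_eq_zero_of_aeval hv hp q hq ?_
  refine vanish_of_integral (K := k) H.comul_one H.counit_one hN v _ Λ (sg H) sg_one
    (comul_odd_mul hv hp) (fun h => ?_) ?_ ?_ hΛ ?_
  · change H.counit (v * h) = 0
    rw [H.counit_mul, hεv, zero_mul]
  · rw [mul_assoc, ← pow_two, hqu]
  · rw [mul_assoc, hvΛ, mul_zero]
  · intro a ha
    have hb : ∀ h, (a ∘ₗ sg H) (v * h) = 0 := fun h => by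
      simp [sg_odd_mul hv, ha]
    refine ⟨a ∘ₗ sg H, fun x h => ?_⟩
    have e1 : ∀ (x : H.carrier →ₗ[k] k) (n : ℕ) (h : H.carrier),
        pair (a ∘ₗ sg H) x (H.comul ((v ^ 2) ^ n * h)) =
          pair (a ∘ₗ sg H) (x ∘ₗ LinearMap.mulLeft k ((v ^ 2) ^ n)) (H.comul h) := by
      intro x n
      induction n generalizing x with
      | zero => intro h; simp
      | succ n ih =>
        intro h
        have e3 : x ∘ₗ LinearMap.mulLeft k ((v ^ 2) ^ (n + 1)) =
            (x ∘ₗ LinearMap.mulLeft k ((v ^ 2) ^ n)) ∘ₗ LinearMap.mulLeft k (v ^ 2) := by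
          ext y; simp [pow_succ]
        rw [e3, pow_succ (v ^ 2), mul_assoc, ih, comul_sq_mul hv hp]
        generalize x ∘ₗ LinearMap.mulLeft k ((v ^ 2) ^ n) = y
        generalize H.comul h = z
        induction z with
        | zero => simp
        | add z z' hz hz' => rw [mul_add, map_add, map_add, hz, hz']
        | tmul b c =>
          rw [add_mul, map_add, Algebra.TensorProduct.tmul_mul_tmul,
            Algebra.TensorProduct.tmul_mul_tmul, pair_tmul, pair_tmul, pair_tmul, pow_two,
            mul_assoc, hb]
          simp [mul_assoc]
    have e2 : ∀ (x : H.carrier →ₗ[k] k) (r : Polynomial k) (h : H.carrier),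
        pair (a ∘ₗ sg H) x (H.comul (Polynomial.aeval (v ^ 2) r * h)) =
          pair (a ∘ₗ sg H) (x ∘ₗ LinearMap.mulLeft k (Polynomial.aeval (v ^ 2) r))
            (H.comul h) := by
      intro x r h
      induction r using Polynomial.induction_on' with
      | add r s hr hs =>
        have : x ∘ₗ LinearMap.mulLeft k (Polynomial.aeval (v ^ 2) (r + s)) =
            x ∘ₗ LinearMap.mulLeft k (Polynomial.aeval (v ^ 2) r) +
            x ∘ₗ LinearMap.mulLeft k (Polynomial.aeval (v ^ 2) s) := by
          ext y; simp [add_mul]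
        rw [this, map_add, add_mul, map_add, map_add, hr, hs]
        simp [pair, TensorProduct.map_add_right]
      | monomial n c =>
        have : x ∘ₗ LinearMap.mulLeft k (Polynomial.aeval (v ^ 2) (Polynomial.monomial n c)) =
            c • (x ∘ₗ LinearMap.mulLeft k ((v ^ 2) ^ n)) := by
          ext y; simp [Polynomial.aeval_monomial, ← Algebra.smul_def]
        rw [this, Polynomial.aeval_monomial, ← Algebra.smul_def, smul_mul_assoc, map_smul,
          map_smul, e1]
        simp [pair, TensorProduct.map_smul_right]
    change pair _ x (H.comul _) = pair _ _ (H.comul h)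
    rw [mul_assoc, e2, comul_odd_mul hv hp]
    have e3 : x ∘ₗ LinearMap.mulLeft k (Polynomial.aeval (v ^ 2) q * v) =
        (x ∘ₗ LinearMap.mulLeft k (Polynomial.aeval (v ^ 2) q)) ∘ₗ LinearMap.mulLeft k v := by
      ext y; simp
    rw [e3]
    generalize x ∘ₗ LinearMap.mulLeft k (Polynomial.aeval (v ^ 2) q) = y
    generalize H.comul h = z
    induction z with
    | zero => simp
    | add z z' hz hz' =>
      simp only [map_add] at hz hz' ⊢
      rw [← hz, ← hz']; abel
    | tmul b c =>
      have := hb b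
      simp only [LinearMap.comp_apply] at this
      simp [this, sg_sg]

end Super
end IrrHopf

/-! ### Integrals and pure evenness -/

namespace IrrHopf
open Coalgebra WithConv

section Super

variable {k : Type} [Field k] {H : HopfSuperalgebra k}

attribute [local instance] coalg

/-- The counit as an algebra map. -/
def counitHom (H : HopfSuperalgebra k) : H.carrier →ₐ[k] k :=
  AlgHom.ofLinearMap H.counit H.counit_one H.counit_mul

theorem counit_primitive {u : H.carrier} (hu : u ∈ H.primitives) : H.counit u = 0 := by
  have h := H.counit_comul u
  rw [(mem_primitives H).1 hu] at h
  simp only [map_add, TensorProduct.map_tmul, TensorProduct.lid_tmul, LinearMap.id_apply,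
    H.counit_one, one_smul, add_eq_right] at h
  simpa [H.counit_one] using congrArg H.counit h

/-- A normalised common annihilator of the primitives, from semisimplicity of `H`. -/
theorem exists_integral_of_semisimple [IsSemisimpleRing H.carrier] :
    ∃ Λ : H.carrier, H.counit Λ = 1 ∧ ∀ u ∈ H.primitives, u * Λ = 0 := by
  obtain ⟨Λ, h1, h2⟩ := exists_integral (counitHom H : H.carrier →+* k)
  exact ⟨Λ, h1, fun u hu => h2 u (counit_primitive hu)⟩

/-- A normalised common annihilator of the primitives, when they form a torus. -/
theorem exists_integral_of_torus [FiniteDimensional k H.carrier]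
    (hc : ∀ u ∈ H.primitives, ∀ v ∈ H.primitives, u * v = v * u)
    (hs : ∀ u ∈ H.primitives, IsSemisimpleRing (Algebra.adjoin k ({u} : Set H.carrier))) :
    ∃ Λ : H.carrier, H.counit Λ = 1 ∧ ∀ u ∈ H.primitives, u * Λ = 0 := by
  classical
  have hone : ∀ u ∈ H.primitives, ∃ Λ ∈ Algebra.adjoin k ({u} : Set H.carrier),
      H.counit Λ = 1 ∧ u * Λ = 0 := by
    intro u hu
    have := hs u hu
    obtain ⟨Λ, h1, h2⟩ := exists_integral
      (((counitHom H).comp (Algebra.adjoin k ({u} : Set H.carrier)).val :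
        Algebra.adjoin k ({u} : Set H.carrier) →ₐ[k] k) :
        Algebra.adjoin k ({u} : Set H.carrier) →+* k)
    refine ⟨Λ, Λ.2, h1, ?_⟩
    have h3 := h2 ⟨u, Algebra.self_mem_adjoin_singleton k u⟩ (counit_primitive hu)
    exact congrArg Subtype.val h3
  have hfin : ∀ s : Finset H.carrier, (∀ u ∈ s, u ∈ H.primitives) →
      ∃ Λ : H.carrier, H.counit Λ = 1 ∧ ∀ u ∈ s, u * Λ = 0 := by
    intro s
    induction s using Finset.induction_on with
    | empty => exact fun _ => ⟨1, H.counit_one, by simp⟩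
    | insert u s _ ih =>
      intro hus
      obtain ⟨Λ, h1, h2⟩ := ih fun v hv => hus v (Finset.mem_insert_of_mem hv)
      have hu := hus u (Finset.mem_insert_self _ _)
      obtain ⟨Λ', hmem, h1', h2'⟩ := hone u hu
      refine ⟨Λ' * Λ, by rw [H.counit_mul, h1, h1', one_mul], fun v hv => ?_⟩
      rcases Finset.mem_insert.1 hv with rfl | hv'
      · rw [← mul_assoc, h2', zero_mul]
      · have hcomm : Λ' * v = v * Λ' := by
          have hle : Algebra.adjoin k ({u} : Set H.carrier) ≤
              Subalgebra.centralizer k ({v} : Set H.carrier) := by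
            rw [Algebra.adjoin_le_iff]
            rintro _ rfl
            rw [SetLike.mem_coe, Subalgebra.mem_centralizer_iff]
            rintro _ rfl
            exact hc _ (hus _ hv) _ hu
          have := (Subalgebra.mem_centralizer_iff k).1 (hle hmem) v rfl
          exact this.symm
        rw [← mul_assoc, ← hcomm, mul_assoc, h2 v hv', mul_zero]
  obtain ⟨s, hs'⟩ := (IsNoetherian.noetherian H.primitives : H.primitives.FG)
  obtain ⟨Λ, h1, h2⟩ := hfin s fun u hu => hs' ▸ Submodule.subset_span hu
  refine ⟨Λ, h1, fun u hu => ?_⟩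
  rw [← hs'] at hu
  induction hu using Submodule.span_induction with
  | mem x hx => exact h2 x hx
  | zero => simp
  | add x y _ _ hx hy => rw [add_mul, hx, hy, add_zero]
  | smul c x _ hx => rw [smul_mul_assoc, hx, smul_zero]

/-- The comultiplication intertwines the odd projections. -/
theorem comul_po (x : H.carrier) : H.comul (H.po x) =
    TensorProduct.map H.pe H.po (H.comul x) + TensorProduct.map H.po H.pe (H.comul x) := by
  have h1 : ∀ z : H.carrier ⊗[k] H.carrier,
      TensorProduct.map H.pe H.po (TensorProduct.map H.pe H.pe z + TensorProduct.map H.po H.po z)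
      + TensorProduct.map H.po H.pe
        (TensorProduct.map H.pe H.pe z + TensorProduct.map H.po H.po z) = 0 := by
    intro z
    induction z with
    | zero => simp
    | add x y hx hy =>
      simp only [map_add] at hx hy ⊢
      rw [← add_zero (0 : H.carrier ⊗[k] H.carrier)]
      nth_rewrite 1 [← hx]
      rw [← hy]
      abel
    | tmul a b => simp [H.pe_po, H.po_pe]
  have h2 := h1 (H.comul (H.pe x))
  rw [← H.comul_even _ (H.po_pe x)] at h2
  have h3 := H.comul_odd _ (H.pe_po x)
  have h4 : H.comul x = H.comul (H.pe x) + H.comul (H.po x) := by rw [← map_add, H.pe_add_po]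
  rw [h4, map_add, map_add, add_add_add_comm, h2, zero_add]
  exact h3

/-- If an element of counit `1` is killed by the primitives, then `H` is purely even: by induction
along the filtration, the odd part of an element of `F₍ₙ₊₁₎` is primitive, hence zero. -/
theorem isPurelyEven [FiniteDimensional k H.carrier] {N : ℕ}
    (hN : filt k H.carrier N = ⊤) {Λ : H.carrier} (hΛ : H.counit Λ = 1)
    (hP : ∀ u ∈ H.primitives, u * Λ = 0) : H.IsPurelyEven := by
  have key : ∀ n, ∀ x ∈ filt k H.carrier n, H.po x = 0 := by
    intro n
    induction n with
    | zero =>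
      intro x hx
      obtain ⟨c, rfl⟩ := Submodule.mem_span_singleton.1 hx
      rw [map_smul, H.one_even, smul_zero]
    | succ n ih =>
      intro x hx
      have hz : del k H.carrier x ∈ tsq (filt k H.carrier n) := hx
      have hT : tsq (filt k H.carrier n) ≤
          LinearMap.ker (TensorProduct.map H.pe H.po + TensorProduct.map H.po H.pe) :=
        tsq_le fun a ha b hb => by simp [ih a ha, ih b hb]
      have h1 := hT hz
      rw [LinearMap.mem_ker, LinearMap.add_apply] at h1
      have hprim : H.po x ∈ H.primitives := by
        rw [mem_primitives, comul_po]
        have h2 : H.comul x = del k H.carrier x + x ⊗ₜ 1 + 1 ⊗ₜ x := comul_eq_del x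
        have hpe1 : H.pe 1 = 1 := by rw [pe_eq, H.one_even, sub_zero]
        rw [h2]
        simp only [map_add, TensorProduct.map_tmul, H.one_even, hpe1, TensorProduct.tmul_zero,
          TensorProduct.zero_tmul, add_zero]
        rw [add_add_add_comm, h1, zero_add, add_comm]
      exact odd_primitive_eq_zero hN hΛ (H.pe_po x) hprim (hP _ hprim)
  intro a
  exact key N a (by rw [hN]; trivial)

/-- The bialgebra underlying a purely even Hopf superalgebra. -/
@[reducible] def evenBialgebra (he : H.IsPurelyEven) : Bialgebra k H.carrier :=
  { coalg H with
    counit_one := H.counit_one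
    mul_compr₂_counit := by ext a b; exact H.counit_mul a b
    comul_one := H.comul_one
    mul_compr₂_comul := by
      ext a b
      change H.comul (a * b) = H.comul a * H.comul b
      have h0 : H.po = 0 := LinearMap.ext he
      rw [H.comul_mul, h0]
      simp }

end Super
end IrrHopf

/-! ### Base change -/

namespace IrrHopf
open Coalgebra WithConv

section BaseChange

variable {k A : Type*} (K : Type*) [Field k] [Field K] [Algebra k K] [Ring A] [Bialgebra k A]

/-- The defect from primitivity commutes with base change. -/
theorem del_baseChange (z : K ⊗[k] A) : del K (K ⊗[k] A) z =
    TensorProduct.AlgebraTensorModule.distribBaseChange k K A A ((del k A).baseChange K z) := by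
  have h : del K (K ⊗[k] A) =
      (TensorProduct.AlgebraTensorModule.distribBaseChange k K A A).toLinearMap ∘ₗ
        (del k A).baseChange K := by
    ext a
    have e1 : comul (R := K) ((1 : K) ⊗ₜ[k] a) =
        TensorProduct.AlgebraTensorModule.distribBaseChange k K A A (1 ⊗ₜ comul a) := by
      rw [TensorProduct.comul_tmul]
      generalize comul (R := k) a = t
      induction t with
      | zero => simp
      | add x y hx hy => simp only [TensorProduct.tmul_add, map_add, hx, hy]
      | tmul x y => simp
    simp [del_apply, e1, TensorProduct.tmul_sub, Algebra.TensorProduct.one_def]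
  rw [h]; rfl

theorem tmul_mem_filt (n : ℕ) : ∀ (s : K) (h : A), h ∈ filt k A n →
    s ⊗ₜ[k] h ∈ filt K (K ⊗[k] A) n := by
  induction n with
  | zero =>
    intro s h hh
    obtain ⟨c, rfl⟩ := Submodule.mem_span_singleton.1 hh
    refine Submodule.mem_span_singleton.2 ⟨c • s, ?_⟩
    rw [Algebra.TensorProduct.one_def, TensorProduct.smul_tmul', TensorProduct.tmul_smul,
      smul_eq_mul, mul_one, TensorProduct.smul_tmul']
  | succ n ih =>
    intro s h hh
    have hh' : del k A h ∈ tsq (filt k A n) := hh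
    change del K (K ⊗[k] A) (s ⊗ₜ[k] h) ∈ tsq (filt K (K ⊗[k] A) n)
    rw [del_baseChange, LinearMap.baseChange_tmul]
    generalize del k A h = t at hh'
    obtain ⟨t, rfl⟩ := hh'
    induction t with
    | zero => simp
    | add x y hx hy =>
      rw [map_add, TensorProduct.tmul_add, map_add]
      exact add_mem hx hy
    | tmul x y =>
      rw [TensorProduct.map_tmul, TensorProduct.AlgebraTensorModule.distribBaseChange_tmul]
      exact tmul_mem_tsq (ih s x x.2) (ih 1 y y.2)

theorem filt_baseChange {N : ℕ} (hN : filt k A N = ⊤) : filt K (K ⊗[k] A) N = ⊤ := by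
  rw [eq_top_iff]
  intro z _
  induction z with
  | zero => exact zero_mem _
  | add x y hx hy => exact add_mem (hx trivial) (hy trivial)
  | tmul s h => exact tmul_mem_filt K N s h (by rw [hN]; trivial)

/-- An element annihilating the primitives on the right keeps doing so after base change. -/
theorem mul_eq_zero_baseChange {Λ : A} (hΛ : ∀ u : A, del k A u = 0 → u * Λ = 0)
    (z : K ⊗[k] A) (hz : del K (K ⊗[k] A) z = 0) : z * ((1 : K) ⊗ₜ[k] Λ) = 0 := by
  rw [del_baseChange, LinearEquiv.map_eq_zero_iff] at hz
  have hz' : z ∈ LinearMap.ker (TensorProduct.AlgebraTensorModule.lTensor K K (del k A)) := hz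
  rw [Module.Flat.ker_lTensor_eq] at hz'
  obtain ⟨t, rfl⟩ := hz'
  clear hz
  induction t with
  | zero => simp
  | add x y hx hy => rw [map_add, add_mul, hx, hy, add_zero]
  | tmul s u =>
    rw [TensorProduct.AlgebraTensorModule.lTensor_tmul, Algebra.TensorProduct.tmul_mul_tmul]
    have : (u : A) * Λ = 0 := hΛ u u.2
    simp [this]

end BaseChange
end IrrHopf

/-! ### Injectivity of the Frobenius map -/

namespace IrrHopf
open Coalgebra WithConv

section Core

variable {K B : Type*} [Field K] [Ring B] [Bialgebra K B]

theorem comul_of_del {z : B} (hz : del K B z = 0) :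
    comul (R := K) z = z ⊗ₜ 1 + 1 ⊗ₜ z := by
  rw [comul_eq_del, hz, zero_add]

theorem counit_of_del {z : B} (hz : del K B z = 0) : counit (R := K) z = 0 := by
  have h := Coalgebra.rTensor_counit_comul (R := K) z
  rw [comul_of_del hz] at h
  have h' := congrArg (TensorProduct.lid K B) h
  simp only [map_add, LinearMap.rTensor_tmul, TensorProduct.lid_tmul, Bialgebra.counit_one,
    one_smul] at h'
  have h2 : (counit (R := K) z) • (1 : B) = 0 := by simpa using h'
  have h3 := congrArg (counit (R := K)) h2
  simpa using h3

theorem comul_one_eq : comul (R := K) (1 : B) = 1 ⊗ₜ[K] 1 := by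
  rw [Bialgebra.comul_one, Algebra.TensorProduct.one_def]

/-- If an element of counit `1` is killed by all primitives, then no nonzero primitive is
nilpotent. -/
theorem primitive_eq_zero [FiniteDimensional K B] {N : ℕ} (hN : filt K B N = ⊤) {Λ : B}
    (hΛ : counit (R := K) Λ = 1) (hP : ∀ u : B, del K B u = 0 → u * Λ = 0)
    {z : B} (hz : del K B z = 0) (hn : IsNilpotent z) : z = 0 := by
  -- lower the nilpotency exponent one step at a time
  have key : ∀ n, 0 < n → z ^ (n + 1) = 0 → z ^ n = 0 := by
    intro n hn hzn
    refine vanish_of_integral comul_one_eq Bialgebra.counit_one hN z (z ^ n) Λ LinearMap.id rfl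
      ?_ ?_ (by rw [← pow_succ, hzn]) ?_ hΛ ?_
    · intro h
      rw [Bialgebra.comul_mul, comul_of_del hz]
      generalize comul (R := K) h = t
      induction t with
      | zero => simp
      | add x y hx hy => simp only [mul_add, hx, hy, map_add]; abel
      | tmul x y => simp [add_mul]
    · intro h
      rw [Bialgebra.counit_mul, counit_of_del hz, zero_mul]
    · obtain ⟨m, rfl⟩ := Nat.exists_eq_succ_of_ne_zero hn.ne'
      rw [Nat.succ_eq_add_one, pow_succ, mul_assoc, hP z hz, mul_zero]
    · intro a ha
      refine ⟨a, ?_⟩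
      have one : ∀ (x : B →ₗ[K] K) (h : B), pair a x (comul (z * h)) =
          pair a (x ∘ₗ LinearMap.mulLeft K z) (comul h) := by
        intro x h
        rw [Bialgebra.comul_mul, comul_of_del hz]
        generalize comul (R := K) h = t
        induction t with
        | zero => simp
        | add x y hx hy => simp only [mul_add, hx, hy, map_add]
        | tmul x y => simp [add_mul, ha]
      clear hzn
      induction n with
      | zero => exact absurd hn (lt_irrefl _)
      | succ n ih =>
        intro x h
        rcases Nat.eq_zero_or_pos n with rfl | hn'
        · simpa using one x h
        · rw [pow_succ', mul_assoc, one, ih hn', LinearMap.mulLeft_mul]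
          rfl
  obtain ⟨n, hn⟩ := hn
  have : ∀ m, z ^ (m + 1) = 0 → z = 0 := by
    intro m
    induction m with
    | zero => intro h; simpa using h
    | succ m ih => intro h; exact ih (key (m + 1) m.succ_pos h)
  exact this n (by rw [pow_succ, hn, zero_mul])

end Core

section Frobenius

variable {K B : Type*} [Field K] [IsAlgClosed K] [Ring B] [Algebra K B] {p : ℕ} [Fact p.Prime]

/-- For pairwise commuting elements, `p`-th powering is additive. -/
theorem sum_pow_p {R ι : Type*} [Ring R] [CharP R p] (s : Finset ι) (f : ι → R)
    (hf : ∀ i j, Commute (f i) (f j)) : (∑ i ∈ s, f i) ^ p = ∑ i ∈ s, f i ^ p := by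
  classical
  induction s using Finset.induction_on with
  | empty => simp [(Fact.out : p.Prime).ne_zero]
  | insert i s hi ih =>
    rw [Finset.sum_insert hi, Finset.sum_insert hi,
      add_pow_char_of_commute p (Commute.sum_right _ _ _ fun j _ => hf i j), ih]

/-- If `W` consists of pairwise commuting elements on which the Frobenius map is injective, then
Frobenius is injective on `W ⊗ W` too. -/
theorem tsq_pow_eq_zero [CharP B p] [CharP (B ⊗[K] B) p] (W : Submodule K B)
    (hc : ∀ x ∈ W, ∀ y ∈ W, x * y = y * x) (hW : ∀ z ∈ W, z ^ p = 0 → z = 0)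
    {y : B ⊗[K] B} (hy : y ∈ tsq W) (hyp : y ^ p = 0) : y = 0 := by
  have hp0 : 0 < p := (Fact.out : p.Prime).pos
  let b := Module.Basis.ofVectorSpace K W
  set ι := Module.Basis.ofVectorSpaceIndex K W
  let v : ι → B := fun i => (b i : B) ^ p
  have hv : LinearIndependent K v := by
    rw [linearIndependent_iff']
    intro s g hg i hi
    choose r hr using fun i => IsAlgClosed.exists_pow_nat_eq (g i) hp0
    have h1 : (∑ j ∈ s, r j • (b j : B)) ^ p = 0 := by
      rw [sum_pow_p (p := p)]
      · rw [← hg]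
        exact Finset.sum_congr rfl fun j _ => by rw [smul_pow, hr]
      · intro i j
        exact ((show Commute (b i : B) (b j : B) from hc _ (b i).2 _ (b j).2).smul_left _).smul_right _
    have h2 : (∑ j ∈ s, r j • (b j : B)) = 0 :=
      hW _ (Submodule.sum_mem _ fun j _ => W.smul_mem _ (b j).2) h1
    have h3 : (∑ j ∈ s, r j • b j) = 0 := by
      apply Subtype.ext
      simpa using h2
    have h4 := linearIndependent_iff'.1 b.linearIndependent s r h3 i hi
    rw [← hr i, h4, zero_pow hp0.ne']
  have hvv : LinearIndependent K (fun ij : ι × ι => v ij.1 ⊗ₜ[K] v ij.2) :=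
    hv.tmul_of_flat_left hv
  obtain ⟨t, rfl⟩ := hy
  let bb := b.tensorProduct b
  rw [← bb.linearCombination_repr t, Finsupp.linearCombination_apply, Finsupp.sum, map_sum] at hyp ⊢
  set s := (bb.repr t).support
  set g := bb.repr t
  choose r hr using fun i => IsAlgClosed.exists_pow_nat_eq (g i) hp0
  have e : ∀ ij, TensorProduct.map W.subtype W.subtype (g ij • bb ij) =
      g ij • ((b ij.1 : B) ⊗ₜ[K] (b ij.2 : B)) := by
    intro ij
    rw [map_smul, show bb ij = b ij.1 ⊗ₜ b ij.2 from Module.Basis.tensorProduct_apply' b b ij]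
    rfl
  simp only [e] at hyp ⊢
  rw [sum_pow_p (p := p)] at hyp
  · simp only [smul_pow, Algebra.TensorProduct.tmul_pow] at hyp
    have := linearIndependent_iff'.1 hvv s (fun ij => g ij ^ p) hyp
    exact Finset.sum_eq_zero fun ij hij => by
      rw [pow_eq_zero_iff hp0.ne' |>.1 (this ij hij), zero_smul]
  · intro i j
    refine ((show Commute _ _ from ?_).smul_left _).smul_right _
    show _ * _ = _ * _
    rw [Algebra.TensorProduct.tmul_mul_tmul, Algebra.TensorProduct.tmul_mul_tmul,
      hc _ (b i.1).2 _ (b j.1).2, hc _ (b i.2).2 _ (b j.2).2]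

end Frobenius

section Reduced

variable {K B : Type*} [Field K] [IsAlgClosed K] [Ring B] [Bialgebra K B] {p : ℕ} [Fact p.Prime]
  [CharP B p] [CharP (B ⊗[K] B) p]

/-- In a commutative subalgebra `C` that is a subcoalgebra, the Frobenius map is injective as soon
as it is so on primitives: if `z ∈ F₍ₙ₊₁₎` and `zᵖ = 0`, then the `p`-th power of `del z`, which lies in
the tensor square of `Fₙ ∩ C`, is `0`, so `z` is primitive. -/
theorem frobenius_injOn [FiniteDimensional K B] {N : ℕ} (hN : filt K B N = ⊤)
    (h0 : ∀ z : B, del K B z = 0 → z ^ p = 0 → z = 0)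
    (C : Subalgebra K B) (hc : ∀ x ∈ C, ∀ y ∈ C, x * y = y * x)
    (hC : ∀ x ∈ C, comul (R := K) x ∈ tsq C.toSubmodule) {z : B} (hz : z ∈ C)
    (hzp : z ^ p = 0) : z = 0 := by
  have hp0 : p ≠ 0 := (Fact.out : p.Prime).ne_zero
  have key : ∀ n, ∀ z ∈ C, z ∈ filt K B n → z ^ p = 0 → z = 0 := by
    intro n
    induction n with
    | zero =>
      intro z _ hz hzp
      obtain ⟨c, rfl⟩ := Submodule.mem_span_singleton.1 hz
      rw [smul_pow, one_pow] at hzp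
      rcases smul_eq_zero.1 hzp with h | h
      · rw [pow_eq_zero_iff hp0 |>.1 h, zero_smul]
      · rw [h, smul_zero]
    | succ n ih =>
      intro z hzC hz hzp
      refine h0 z ?_ hzp
      have h1 : del K B z ∈ tsq (filt K B n ⊓ C.toSubmodule) := by
        refine mem_tsq_inf hz ?_
        rw [del_apply]
        exact sub_mem (sub_mem (hC z hzC) (tmul_mem_tsq hzC C.one_mem)) (tmul_mem_tsq C.one_mem hzC)
      refine tsq_pow_eq_zero (p := p) (filt K B n ⊓ C.toSubmodule) (fun x hx y hy => hc x hx.2 y hy.2)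
        (fun z hz => ih z hz.2 hz.1) h1 ?_
      have hcomm : ∀ t ∈ tsq C.toSubmodule, ∀ s ∈ tsq C.toSubmodule, Commute t s := by
        rintro _ ⟨t, rfl⟩ _ ⟨s, rfl⟩
        induction t with
        | zero => simp
        | add x y hx hy => rw [map_add]; exact hx.add_left hy
        | tmul a b =>
          induction s with
          | zero => simp
          | add x y hx hy => rw [map_add]; exact hx.add_right hy
          | tmul c d =>
            show _ * _ = _ * _
            simp only [TensorProduct.map_tmul, Algebra.TensorProduct.tmul_mul_tmul]
            exact congrArg₂ _ (hc _ a.2 _ c.2) (hc _ b.2 _ d.2)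
      have m1 := tmul_mem_tsq (D := C.toSubmodule) hzC C.one_mem
      have m2 := tmul_mem_tsq (D := C.toSubmodule) C.one_mem hzC
      have m3 := hC z hzC
      rw [del_apply, sub_pow_char_of_commute (p := p) (hcomm _ (sub_mem m3 m1) _ m2),
        sub_pow_char_of_commute (p := p) (hcomm _ m3 _ m1), ← Bialgebra.comul_pow, hzp,
        Algebra.TensorProduct.tmul_pow, Algebra.TensorProduct.tmul_pow, hzp]
      simp
  exact key N z hz (by rw [hN]; trivial) hzp

end Reduced
end IrrHopf

/-! ### Commutativity -/

namespace IrrHopf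
open Coalgebra WithConv

section Central

variable {K B : Type*} [Field K] [Ring B]

/-- The inner derivation `y ↦ xy - yx`. -/
def adj (K : Type*) {B : Type*} [Field K] [Ring B] [Algebra K B] (x : B) : Module.End K B :=
  LinearMap.mulLeft K x - LinearMap.mulRight K x

theorem adj_apply [Algebra K B] (x y : B) : adj K x y = x * y - y * x := rfl

theorem mul_mem_tsq [Algebra K B] {C : Subalgebra K B} {s t : B ⊗[K] B}
    (hs : s ∈ tsq C.toSubmodule) (ht : t ∈ tsq C.toSubmodule) : s * t ∈ tsq C.toSubmodule := by
  obtain ⟨s, rfl⟩ := hs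
  obtain ⟨t, rfl⟩ := ht
  induction s with
  | zero => simp
  | add x y hx hy => rw [map_add, add_mul]; exact add_mem hx hy
  | tmul a b =>
    induction t with
    | zero => simp
    | add x y hx hy => rw [map_add, mul_add]; exact add_mem hx hy
    | tmul c d =>
      rw [TensorProduct.map_tmul, TensorProduct.map_tmul, Algebra.TensorProduct.tmul_mul_tmul]
      exact tmul_mem_tsq (C.mul_mem a.2 c.2) (C.mul_mem b.2 d.2)

/-- A subalgebra generated by a subcoalgebra is a subcoalgebra. -/
theorem adjoin_stable [Bialgebra K B] {s : Set B}
    (hs : ∀ x ∈ s, comul (R := K) x ∈ tsq (Algebra.adjoin K s).toSubmodule) :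
    ∀ x ∈ Algebra.adjoin K s, comul (R := K) x ∈ tsq (Algebra.adjoin K s).toSubmodule := by
  have h1 : (1 : B ⊗[K] B) ∈ tsq (Algebra.adjoin K s).toSubmodule :=
    tmul_mem_tsq (one_mem (Algebra.adjoin K s)) (one_mem (Algebra.adjoin K s))
  intro x hx
  induction hx using Algebra.adjoin_induction with
  | mem x hx => exact hs x hx
  | algebraMap r =>
    rw [Algebra.algebraMap_eq_smul_one, map_smul, Bialgebra.comul_one]
    exact Submodule.smul_mem _ _ h1
  | add x y _ _ hx hy => rw [map_add]; exact add_mem hx hy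
  | mul x y _ _ hx hy => rw [Bialgebra.comul_mul]; exact mul_mem_tsq hx hy

theorem aeval_mulRight [Algebra K B] (x y : B) (P : Polynomial K) :
    Polynomial.aeval (LinearMap.mulRight K x) P y = y * Polynomial.aeval x P := by
  induction P using Polynomial.induction_on' with
  | add P Q hP hQ => simp [hP, hQ, mul_add]
  | monomial n c =>
    simp [Polynomial.aeval_monomial, Algebra.algebraMap_eq_smul_one]

variable [Bialgebra K B] [FiniteDimensional K B] [IsAlgClosed K] {p : ℕ} [Fact p.Prime]
  [CharP B p] [CharP (B ⊗[K] B) p] {N : ℕ} (hN : filt K B N = ⊤)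
  (h0 : ∀ z : B, del K B z = 0 → z ^ p = 0 → z = 0)

include hN h0

/-- Elements of commutative subbialgebras act semisimply by commutators: the subbialgebra is reduced,
so their minimal polynomials are squarefree, and left and right multiplication commute. -/
theorem adj_isSemisimple (C : Subalgebra K B) (hc : ∀ x ∈ C, ∀ y ∈ C, x * y = y * x)
    (hC : ∀ x ∈ C, comul (R := K) x ∈ tsq C.toSubmodule) {x : B} (hx : x ∈ C) :
    (adj K x).IsSemisimple := by
  have : IsReduced C := by
    rw [isReduced_iff_pow_one_lt p (Fact.out : p.Prime).one_lt]
    intro z hz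
    exact Subtype.ext (frobenius_injOn hN h0 C hc hC z.2 (congrArg Subtype.val hz))
  have hsq : Squarefree (minpoly K (⟨x, hx⟩ : C)) :=
    (minpoly.isRadical K _).squarefree (minpoly.ne_zero (.of_finite K _))
  have h2 : Polynomial.aeval x (minpoly K (⟨x, hx⟩ : C)) = 0 := by
    have := congrArg C.val (minpoly.aeval K (⟨x, hx⟩ : C))
    rwa [map_zero, ← Polynomial.aeval_algHom_apply] at this
  refine Module.End.IsSemisimple.sub_of_commute ?_
    (Module.End.isSemisimple_of_squarefree_aeval_eq_zero hsq ?_)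
    (Module.End.isSemisimple_of_squarefree_aeval_eq_zero hsq ?_)
  · ext y
    simp [mul_assoc]
  · have : LinearMap.mulLeft K x = Algebra.lmul K B x := rfl
    rw [this, Polynomial.aeval_algHom_apply, h2, map_zero]
  · ext y
    rw [aeval_mulRight, h2, mul_zero, LinearMap.zero_apply]

/-- A semisimple operator has no generalised eigenvectors beyond the genuine ones. -/
theorem adj_adj (C : Subalgebra K B) (hc : ∀ x ∈ C, ∀ y ∈ C, x * y = y * x)
    (hC : ∀ x ∈ C, comul (R := K) x ∈ tsq C.toSubmodule) {x y : B} (hx : x ∈ C)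
    (h : adj K x (adj K x y) = 0) : adj K x y = 0 := by
  have hs := (Module.End.isFinitelySemisimple_iff_isSemisimple.2
    (adj_isSemisimple hN h0 C hc hC hx)).maxGenEigenspace_eq_eigenspace 0
  have hm : y ∈ (adj K x).maxGenEigenspace 0 := by
    rw [Module.End.mem_maxGenEigenspace]
    exact ⟨2, by simpa [pow_two] using h⟩
  rw [hs, Module.End.mem_eigenspace_iff, zero_smul] at hm
  exact hm

omit hN h0 [FiniteDimensional K B] [IsAlgClosed K] in
theorem primitive_adjoin {u : B} (hu : del K B u = 0) :
    (∀ x ∈ Algebra.adjoin K {u}, ∀ y ∈ Algebra.adjoin K {u}, x * y = y * x) ∧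
    ∀ x ∈ Algebra.adjoin K {u}, comul (R := K) x ∈ tsq (Algebra.adjoin K {u}).toSubmodule := by
  refine ⟨fun x hx y hy => ?_, adjoin_stable ?_⟩
  · have h1 := Algebra.commute_of_mem_adjoin_self hx
    exact (Algebra.commute_of_mem_adjoin_singleton_of_commute hy h1.symm)
  · intro z hz
    rw [Set.mem_singleton_iff.1 hz, comul_of_del hu]
    have h1 := Algebra.self_mem_adjoin_singleton K u
    have h2 : (1 : B) ∈ Algebra.adjoin K {u} := one_mem _
    exact add_mem (tmul_mem_tsq h1 h2) (tmul_mem_tsq h2 h1)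

omit hN h0 [FiniteDimensional K B] [IsAlgClosed K] in
theorem del_adj {u v : B} (hu : del K B u = 0) (hv : del K B v = 0) :
    del K B (adj K u v) = 0 := by
  rw [del_apply, adj_apply, map_sub, Bialgebra.comul_mul, Bialgebra.comul_mul, comul_of_del hu,
    comul_of_del hv]
  simp only [mul_add, add_mul, Algebra.TensorProduct.tmul_mul_tmul, one_mul, mul_one,
    TensorProduct.sub_tmul, TensorProduct.tmul_sub]
  abel

/-- Primitives commute. If `w` is a primitive eigenvector of `[u, ·]`, then `[w, [w, u]] = 0`, so
`[w, u] = 0` by semisimplicity of `[w, ·]`; thus the semisimple operator `[u, ·]` on the primitives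
has no eigenvalue other than `0`. -/
theorem primitive_comm {u v : B} (hu : del K B u = 0) (hv : del K B v = 0) :
    adj K u v = 0 := by
  let P := LinearMap.ker (del K B)
  have hP : P ∈ (adj K u).invtSubmodule := fun w hw => del_adj hu hw
  have hss : ∀ w, del K B w = 0 → (adj K w).IsSemisimple := fun w hw =>
    adj_isSemisimple hN h0 _ (primitive_adjoin hw).1 (primitive_adjoin hw).2
      (Algebra.self_mem_adjoin_singleton K w)
  have h := ((hss u hu).restrict hP).eq_zero_iff_forall_eigenvalue.2 ?_
  · exact congrArg Subtype.val (LinearMap.congr_fun h ⟨v, hv⟩)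
  intro μ hμ
  obtain ⟨w, hw⟩ := hμ.exists_hasEigenvector
  have h1 : adj K u (w : B) = μ • (w : B) := congrArg Subtype.val hw.apply_eq_smul
  have h2 : adj K (w : B) u = 0 := by
    refine adj_adj hN h0 _ (primitive_adjoin w.2).1 (primitive_adjoin w.2).2
      (Algebra.self_mem_adjoin_singleton K (w : B)) ?_
    have : adj K (w : B) u = -(μ • (w : B)) := by
      rw [← h1, adj_apply, adj_apply, neg_sub]
    rw [this, map_neg, map_smul, adj_apply, sub_self, smul_zero, neg_zero]
  have h3 : adj K u (w : B) = 0 := by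
    rw [adj_apply, ← neg_sub, ← adj_apply (K := K), h2, neg_zero]
  rw [h1] at h3
  exact (smul_eq_zero.1 h3).resolve_right fun h => hw.2 (Subtype.ext h)

/-- A connected bialgebra without primitives of vanishing `p`-th power is commutative. If `Fₙ` is
central and `x ∈ F₍ₙ₊₁₎`, then `x` and `Fₙ` generate a commutative subbialgebra, so `[x, ·]` is
semisimple; an inner induction shows that `[x, y]` is primitive, hence commutes with `x`, for `y` in
the next layer. -/
theorem mul_comm_of_filt : ∀ x y : B, x * y = y * x := by
  have key : ∀ n, ∀ x ∈ filt K B n, ∀ y : B, x * y = y * x := by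
    intro n
    induction n with
    | zero =>
      intro x hx y
      obtain ⟨c, rfl⟩ := Submodule.mem_span_singleton.1 hx
      simp
    | succ n ih =>
      intro x hx y
      set s : Set B := insert x (filt K B n : Set B) with hs
      have hxs : x ∈ Algebra.adjoin K s := Algebra.subset_adjoin (Set.mem_insert _ _)
      have hfs : filt K B n ≤ (Algebra.adjoin K s).toSubmodule := fun z hz =>
        Algebra.subset_adjoin (Set.mem_insert_of_mem _ hz)
      have hC := adjoin_stable (K := K) (s := s) (by
        rintro z (rfl | hz)
        · rw [comul_eq_del]
          exact add_mem (add_mem (tsq_mono hfs hx) (tmul_mem_tsq hxs (one_mem (Algebra.adjoin K s))))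
            (tmul_mem_tsq (one_mem (Algebra.adjoin K s)) hxs)
        · exact tsq_mono hfs (comul_mem_tsq_filt comul_one_eq hz))
      have hc : ∀ a ∈ Algebra.adjoin K s, ∀ b ∈ Algebra.adjoin K s, a * b = b * a := by
        have := Algebra.isMulCommutative_adjoin K (s := s) (by
          rintro a (rfl | ha) b (rfl | hb)
          · rfl
          · exact (ih b hb _).symm
          · exact ih a ha _
          · exact ih a ha _)
        intro a ha b hb
        exact setLike_mul_comm ha hb
      -- for `n = 0`, `x` is primitive up to a scalar; otherwise primitives lie in `F₁ ≤ Fₙ`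
      have hprim : ∀ v : B, del K B v = 0 → adj K x v = 0 := by
        intro v hv
        rcases Nat.eq_zero_or_pos n with rfl | hn
        · obtain ⟨t, ht⟩ : ∃ t : K, del K B x = t • (1 ⊗ₜ[K] 1) := by
            have hx' : del K B x ∈ tsq (filt K B 0) := hx
            have : tsq (filt K B 0) ≤ Submodule.span K {(1 : B) ⊗ₜ[K] (1 : B)} := by
              refine tsq_le fun a ha b hb => ?_
              obtain ⟨c, rfl⟩ := Submodule.mem_span_singleton.1 ha
              obtain ⟨d, rfl⟩ := Submodule.mem_span_singleton.1 hb
              rw [TensorProduct.smul_tmul_smul]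
              exact Submodule.smul_mem _ _ (Submodule.mem_span_singleton_self _)
            obtain ⟨t, ht⟩ := Submodule.mem_span_singleton.1 (this hx')
            exact ⟨t, ht.symm⟩
          have h1 : del K B (x + t • 1) = 0 := by
            rw [map_add, map_smul, ht, del_apply, comul_one_eq]
            simp
          have h2 := primitive_comm hN h0 h1 hv
          rw [adj_apply] at h2 ⊢
          simpa [add_mul, mul_add] using h2
        · have hv1 : v ∈ filt K B 1 := by
            change del K B v ∈ tsq (filt K B 0)
            rw [hv]; exact zero_mem _
          rw [adj_apply, ih v (filt_mono comul_one_eq hn hv1), sub_self]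
      have inner : ∀ m, ∀ y ∈ filt K B m, adj K x y = 0 := by
        intro m
        induction m with
        | zero =>
          intro y hy
          obtain ⟨c, rfl⟩ := Submodule.mem_span_singleton.1 hy
          simp [adj_apply]
        | succ m ihm =>
          intro y hy
          refine adj_adj hN h0 _ hc hC hxs (hprim _ ?_)
          have hcen : ∀ t ∈ tsq (filt K B n), ∀ z, t * z - z * t = 0 := by
            rintro _ ⟨t, rfl⟩ z
            induction t with
            | zero => simp
            | add a b ha hb =>
              rw [map_add, add_mul, mul_add, add_sub_add_comm, ha, hb, add_zero]
            | tmul a b =>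
              induction z with
              | zero => simp
              | add c d hc hd => rw [mul_add, add_mul, add_sub_add_comm, hc, hd, add_zero]
              | tmul c d =>
                simp only [TensorProduct.map_tmul, Algebra.TensorProduct.tmul_mul_tmul,
                  Submodule.subtype_apply]
                rw [ih a a.2 c, ih b b.2 d, sub_self]
          have hD : ∀ z ∈ tsq (filt K B m), (x ⊗ₜ[K] (1 : B) + 1 ⊗ₜ x) * z -
              z * (x ⊗ₜ[K] (1 : B) + 1 ⊗ₜ x) = 0 := by
            rintro _ ⟨z, rfl⟩
            induction z with
            | zero => simp
            | add a b ha hb =>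
              rw [map_add, add_mul _ _ (x ⊗ₜ[K] (1 : B) + 1 ⊗ₜ x),
                mul_add (x ⊗ₜ[K] (1 : B) + 1 ⊗ₜ x), add_sub_add_comm, ha, hb, add_zero]
            | tmul a b =>
              have ha := sub_eq_zero.1 (ihm a a.2)
              have hb := sub_eq_zero.1 (ihm b b.2)
              simp only [LinearMap.mulLeft_apply, LinearMap.mulRight_apply] at ha hb
              simp only [TensorProduct.map_tmul, Submodule.subtype_apply, add_mul, mul_add,
                Algebra.TensorProduct.tmul_mul_tmul, one_mul, mul_one, ha, hb, sub_self]
          -- `Δ[x, y] - [x, y] ⊗ 1 - 1 ⊗ [x, y]` is `[del x, Δ y] + [x ⊗ 1 + 1 ⊗ x, del y]`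
          have e1 := hcen _ hx (comul y)
          have e2 := hD _ hy
          rw [del_apply, adj_apply, map_sub, Bialgebra.comul_mul, Bialgebra.comul_mul,
            comul_eq_del x]
          generalize del K B x = t at e1
          rw [comul_eq_del y] at e1 ⊢
          generalize del K B y = z at e1 e2
          have e3 : (x ⊗ₜ[K] (1 : B)) * (y ⊗ₜ 1) = (x * y) ⊗ₜ 1 := by simp
          have e4 : ((1 : B) ⊗ₜ[K] x) * (1 ⊗ₜ y) = 1 ⊗ₜ (x * y) := by simp
          have e5 : (y ⊗ₜ[K] (1 : B)) * (x ⊗ₜ 1) = (y * x) ⊗ₜ 1 := by simp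
          have e6 : ((1 : B) ⊗ₜ[K] y) * (1 ⊗ₜ x) = 1 ⊗ₜ (y * x) := by simp
          have e7 : ((1 : B) ⊗ₜ[K] x) * (y ⊗ₜ 1) = y ⊗ₜ x := by simp
          have e8 : (y ⊗ₜ[K] (1 : B)) * (1 ⊗ₜ x) = y ⊗ₜ x := by simp
          have e9 : ((1 : B) ⊗ₜ[K] y) * (x ⊗ₜ 1) = x ⊗ₜ y := by simp
          have e10 : (x ⊗ₜ[K] (1 : B)) * (1 ⊗ₜ y) = x ⊗ₜ y := by simp
          rw [TensorProduct.sub_tmul, TensorProduct.tmul_sub, ← add_zero (0 : B ⊗[K] B)]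
          nth_rewrite 1 [← e1]
          rw [← e2]
          simp only [mul_add, add_mul, e3, e4, e5, e6, e7, e8, e9, e10]
          abel
      exact sub_eq_zero.1 (inner N y (by rw [hN]; trivial))
  exact fun x => key N x (by rw [hN]; trivial)

theorem isReduced_of_filt : IsReduced B := by
  rw [isReduced_iff_pow_one_lt p (Fact.out : p.Prime).one_lt]
  intro z hz
  refine frobenius_injOn hN h0 ⊤ (fun x _ y _ => mul_comm_of_filt hN h0 x y) (fun x _ => ?_)
    (z := z) trivial hz
  have := comul_mem_tsq_filt (K := K) (B := B) comul_one_eq (n := N) (h := x) (by rw [hN]; trivial)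
  rw [hN] at this
  exact this

end Central
end IrrHopf

/-! ### Points and function algebras -/

namespace IrrHopf
open Coalgebra WithConv

section Reduced

theorem isSemisimpleRing_of_isReduced (k : Type*) {A : Type*} [Field k] [Ring A] [Algebra k A]
    [FiniteDimensional k A] [IsReduced A] (hc : ∀ x y : A, x * y = y * x) :
    IsSemisimpleRing A := by
  let _ : CommRing A := { (inferInstance : Ring A) with mul_comm := hc }
  have : IsArtinianRing A := IsArtinianRing.of_finite k A
  exact IsArtinianRing.isSemisimpleRing_of_isReduced A

theorem exists_algHom_ne_zero_aux {K R : Type*} [Field K] [IsAlgClosed K] [CommRing R] [Algebra K R]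
    [FiniteDimensional K R] [IsReduced R] {z : R} (hz : z ≠ 0) : ∃ φ : R →ₐ[K] K, φ z ≠ 0 := by
  have : IsArtinianRing R := IsArtinianRing.of_finite K R
  have h1 : z ∉ nilradical R := by
    rw [nilradical_eq_zero]; exact hz
  rw [nilradical_eq_sInf, Submodule.mem_sInf] at h1
  push Not at h1
  obtain ⟨I, hI, hzI⟩ := h1
  have hI' : Ideal.IsPrime I := hI
  have hmax : Ideal.IsMaximal I := IsArtinianRing.isMaximal_of_isPrime I
  let _ : Field (R ⧸ I) := Ideal.Quotient.field I
  have : Algebra.IsIntegral K (R ⧸ I) := Algebra.IsIntegral.of_finite K _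
  have hb : Function.Bijective (algebraMap K (R ⧸ I)) :=
    IsAlgClosed.algebraMap_bijective_of_isIntegral
  let f : K ≃ₐ[K] (R ⧸ I) := AlgEquiv.ofBijective (Algebra.ofId K (R ⧸ I)) hb
  refine ⟨(f.symm : (R ⧸ I) →ₐ[K] K).comp (Ideal.Quotient.mkₐ K I), ?_⟩
  intro h
  have h2 : f.symm (Ideal.Quotient.mk I z) = 0 := h
  rw [map_eq_zero_iff _ f.symm.injective, Ideal.Quotient.eq_zero_iff_mem] at h2
  exact hzI h2

/-- Over an algebraically closed field, characters separate the points of a commutative reduced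
finite-dimensional algebra. -/
theorem exists_algHom_ne_zero {K R : Type*} [Field K] [IsAlgClosed K] [Ring R] [Algebra K R]
    [FiniteDimensional K R] [IsReduced R] (hc : ∀ x y : R, x * y = y * x) {z : R} (hz : z ≠ 0) :
    ∃ φ : R →ₐ[K] K, φ z ≠ 0 := by
  let _ : CommRing R := { (inferInstance : Ring R) with mul_comm := hc }
  exact exists_algHom_ne_zero_aux hz

end Reduced

section Bialg

variable {k A : Type} [Field k] [Ring A] [Bialgebra k A] [FiniteDimensional k A]

/-- An element of counit `1` killed by all primitives forces a connected bialgebra to be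
commutative and geometrically reduced. -/
theorem geometrically_reduced {N : ℕ} (hN : filt k A N = ⊤) {Λ : A}
    (hΛ : counit (R := k) Λ = 1) (hP : ∀ u : A, del k A u = 0 → u * Λ = 0)
    (p : ℕ) [Fact p.Prime] [CharP k p] (K : Type) [Field K] [IsAlgClosed K] [Algebra k K] :
    (∀ x y : K ⊗[k] A, x * y = y * x) ∧ IsReduced (K ⊗[k] A) := by
  have hN' := filt_baseChange K hN
  have hP' := mul_eq_zero_baseChange K hP
  have hΛ' : counit (R := K) ((1 : K) ⊗ₜ[k] Λ) = 1 := by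
    rw [TensorProduct.counit_tmul, hΛ]; simp
  have hn : ∀ (B : Type) [Ring B] [Bialgebra K B], Nontrivial B := fun B _ _ =>
    ⟨1, 0, fun h => by simpa using congrArg (counit (R := K)) h⟩
  have := hn (K ⊗[k] A)
  have := hn ((K ⊗[k] A) ⊗[K] (K ⊗[k] A))
  have : CharP K p := charP_of_injective_algebraMap (algebraMap k K).injective p
  have : CharP (K ⊗[k] A) p := charP_of_injective_algebraMap (algebraMap K (K ⊗[k] A)).injective p
  have : CharP ((K ⊗[k] A) ⊗[K] (K ⊗[k] A)) p :=
    charP_of_injective_algebraMap (algebraMap K ((K ⊗[k] A) ⊗[K] (K ⊗[k] A))).injective p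
  have h0 : ∀ z : K ⊗[k] A, del K _ z = 0 → z ^ p = 0 → z = 0 := fun z hz hzp =>
    primitive_eq_zero hN' hΛ' hP' hz ⟨p, hzp⟩
  exact ⟨mul_comm_of_filt hN' h0, isReduced_of_filt hN' h0⟩

variable {p : ℕ} [Fact p.Prime] [CharP k p]

omit [FiniteDimensional k A] in
/-- The points of a connected bialgebra in characteristic `p` have `p`-power order, because `g - 1`
is nilpotent for convolution. -/
theorem conv_pow_eq_one {L : Type} [Field L] [Algebra k L] {N : ℕ} (hN : filt k A N = ⊤)
    (g : WithConv (A →ₐ[k] L)) : g ^ p ^ (N + 1) = 1 := by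
  have hnt : Nontrivial (WithConv (A →ₗ[k] L)) := ⟨1, 0, fun h => by
    have := congrArg (fun f : WithConv (A →ₗ[k] L) => f 1) h
    simp at this⟩
  have : CharP L p := charP_of_injective_algebraMap (algebraMap k L).injective p
  have hp0 : ((p : ℕ) : WithConv (A →ₗ[k] L)) = 0 := by
    rw [← nsmul_one]
    ext a
    change p • ((1 : WithConv (A →ₗ[k] L)) a) = 0
    rw [nsmul_eq_mul, CharP.cast_eq_zero, zero_mul]
  have : CharP (WithConv (A →ₗ[k] L)) p :=
    (CharP.charP_iff_prime_eq_zero (Fact.out : p.Prime)).2 hp0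
  have h1 : (toConv g.ofConv.toLinearMap - 1) ^ (N + 1) = 0 :=
    conv_isNilpotent _ (by
      change g.ofConv 1 - (1 : WithConv (A →ₗ[k] L)) 1 = 0
      simp) comul_one_eq hN
  have h2 : (toConv g.ofConv.toLinearMap - 1) ^ p ^ (N + 1) = 0 :=
    pow_eq_zero_of_le (Nat.lt_pow_self (Fact.out : p.Prime).one_lt).le h1
  rw [sub_pow_char_pow_of_commute p _ (Commute.one_right _), one_pow, sub_eq_zero,
    ← AlgHom.toLinearMap_convPow] at h2
  apply WithConv.ofConv_injective
  apply AlgHom.toLinearMap_injective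
  exact WithConv.toConv_injective h2

/-- A connected bialgebra which is commutative and reduced over the algebraically closed field `K`
becomes over `K` the function algebra of its group of `K`-points, a finite `p`-group: distinct
characters are linearly independent and separate points. -/
theorem exists_group {N : ℕ} (hN : filt k A N = ⊤) (K : Type) [Field K] [IsAlgClosed K]
    [Algebra k K] (hc : ∀ x y : K ⊗[k] A, x * y = y * x) (hred : IsReduced (K ⊗[k] A)) :
    ∃ (G : Type) (_ : Group G) (_ : Fintype G), IsPGroup p G ∧
      ∃ e : (K ⊗[k] A) ≃ₐ[K] (G → K),
        (∀ (a : A) (g h : G) (n : ℕ) (x y : Fin n → A),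
          comul (R := k) a = ∑ i, x i ⊗ₜ[k] y i →
            e ((1 : K) ⊗ₜ[k] a) (g * h) = ∑ i, e (1 ⊗ₜ[k] x i) g * e (1 ⊗ₜ[k] y i) h) ∧
        (∀ a : A, e ((1 : K) ⊗ₜ[k] a) (1 : G) = algebraMap k K (counit a)) := by
  -- the group of `K`-points, under convolution; inverses are powers
  let G := WithConv (A →ₐ[k] K)
  have hpow : ∀ g : G, g ^ p ^ (N + 1) = 1 := conv_pow_eq_one hN
  have hpos : 0 < p ^ (N + 1) := pow_pos (Fact.out : p.Prime).pos _
  let _ : Group G :=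
    { (inferInstance : Monoid G) with
      inv := fun g => g ^ (p ^ (N + 1) - 1)
      inv_mul_cancel := fun g => by
        change g ^ (p ^ (N + 1) - 1) * g = 1
        rw [← pow_succ, Nat.sub_add_cancel hpos, hpow] }
  let φ : G → (K ⊗[k] A →ₐ[K] K) := fun g =>
    Algebra.TensorProduct.lift (Algebra.ofId K K) g.ofConv fun _ _ => Commute.all _ _
  have hφ : ∀ g a, φ g ((1 : K) ⊗ₜ a) = g.ofConv a := fun g a => by simp [φ]
  have hφi : Function.Injective φ := by
    intro g h hgh
    apply WithConv.ofConv_injective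
    ext a
    rw [← hφ, ← hφ, hgh]
  have hli : LinearIndependent K fun g : G => (φ g).toLinearMap := by
    have h1 := (linearIndependent_monoidHom (K ⊗[k] A) K).comp
      (fun g : G => ((φ g : K ⊗[k] A →* K))) (by
        intro g h hgh
        exact hφi (AlgHom.ext fun z => DFunLike.congr_fun hgh z))
    let c : (K ⊗[k] A →ₗ[K] K) →ₗ[K] (K ⊗[k] A → K) := LinearMap.ltoFun K _ K K
    exact LinearIndependent.of_comp c h1
  have : Finite G := hli.finite
  let _ : Fintype G := Fintype.ofFinite G
  have hcard : Fintype.card G ≤ Module.finrank K (K ⊗[k] A) := by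
    rw [← Subspace.dual_finrank_eq]
    exact hli.fintype_card_le_finrank
  let ev : K ⊗[k] A →ₐ[K] (G → K) := AlgHom.pi φ
  have hinj : Function.Injective ev := by
    rw [injective_iff_map_eq_zero]
    intro z hz
    by_contra hne
    obtain ⟨ψ, hψ⟩ := exists_algHom_ne_zero (K := K) hc hne
    let g : G := toConv ((ψ.restrictScalars k).comp Algebra.TensorProduct.includeRight)
    have hg : φ g = ψ := by
      ext a
      simp [φ, g]
    exact hψ (by rw [← hg]; exact congrFun hz g)
  have hfr : Module.finrank K (K ⊗[k] A) = Module.finrank K (G → K) := by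
    refine le_antisymm (LinearMap.finrank_le_finrank_of_injective (f := ev.toLinearMap) hinj) ?_
    rwa [Module.finrank_fintype_fun_eq_card]
  have hsurj : Function.Surjective ev :=
    (LinearMap.injective_iff_surjective_of_finrank_eq_finrank (f := ev.toLinearMap) hfr).1 hinj
  refine ⟨G, inferInstance, inferInstance, fun g => ⟨N + 1, hpow g⟩,
    AlgEquiv.ofBijective ev ⟨hinj, hsurj⟩, ?_, ?_⟩
  · intro a g h n x y hxy
    have e1 : ∀ (g : G) a, ev ((1 : K) ⊗ₜ a) g = g.ofConv a := hφ
    change ev (1 ⊗ₜ a) (g * h) = ∑ i : Fin n, ev (1 ⊗ₜ x i) g * ev (1 ⊗ₜ y i) h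
    simp only [e1]
    change (g * h) a = _
    rw [AlgHom.convMul_apply, hxy, map_sum]
    simp
  · intro a
    exact hφ 1 a

end Bialg

end IrrHopf

/-! ### Structure of the Hopf superalgebra -/

namespace IrrHopf
open Coalgebra WithConv

section Final

variable {k : Type} [Field k] {H : HopfSuperalgebra k}

/-- Irreducibility makes the primitive filtration exhaustive. -/
theorem exists_filt_eq_top_of_irreducible [FiniteDimensional k H.carrier]
    (hirr : H.IsIrreducible) :
    letI := coalg H
    ∃ N, filt k H.carrier N = ⊤ := by
  let _ := coalg H
  exact exists_filt_eq_top H.comul_one H.counit_one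
    (fun D hD hne => one_mem_of_coradical H.comul hirr D hD hne)

/-- The common core of all implications: an element of counit `1` killed by the primitives forces
`H` to be purely even, commutative, reduced and a form of the function algebra of a `p`-group. -/
theorem structure_of_integral [FiniteDimensional k H.carrier] {p : ℕ} [Fact p.Prime] [CharP k p]
    (hirr : H.IsIrreducible)
    (hΛ : ∃ Λ : H.carrier, H.counit Λ = 1 ∧ ∀ u ∈ H.primitives, u * Λ = 0) :
    H.IsPurelyEven ∧ (∀ a b : H.carrier, a * b = b * a) ∧ IsReduced H.carrier ∧
    ∃ (G : Type) (_ : Group G) (_ : Fintype G), IsPGroup p G ∧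
        ∃ e : ((AlgebraicClosure k) ⊗[k] H.carrier) ≃ₐ[AlgebraicClosure k]
            (G → AlgebraicClosure k),
          (∀ (a : H.carrier) (g h : G) (n : ℕ) (x y : Fin n → H.carrier),
            H.comul a = ∑ i, x i ⊗ₜ[k] y i →
            e ((1 : AlgebraicClosure k) ⊗ₜ[k] a) (g * h) =
              ∑ i, e (1 ⊗ₜ[k] x i) g * e (1 ⊗ₜ[k] y i) h) ∧
          (∀ a : H.carrier,
            e ((1 : AlgebraicClosure k) ⊗ₜ[k] a) (1 : G) =
              algebraMap k (AlgebraicClosure k) (H.counit a)) := by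
  obtain ⟨N, hN⟩ := exists_filt_eq_top_of_irreducible hirr
  obtain ⟨Λ, hΛ, hP⟩ := hΛ
  have he : H.IsPurelyEven := isPurelyEven hN hΛ hP
  let _ : Bialgebra k H.carrier := evenBialgebra he
  have hN' : filt k H.carrier N = ⊤ := hN
  obtain ⟨hc, hred⟩ := geometrically_reduced hN' hΛ (fun u hu => hP u (by
    rw [mem_primitives]; exact comul_of_del hu)) p (AlgebraicClosure k)
  have hinj : Function.Injective
      (Algebra.TensorProduct.includeRight : H.carrier →ₐ[k] AlgebraicClosure k ⊗[k] H.carrier) :=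
    Algebra.TensorProduct.includeRight_injective (algebraMap k (AlgebraicClosure k)).injective
  refine ⟨he, fun a b => hinj ?_, isReduced_of_injective _ hinj,
    exists_group hN' (AlgebraicClosure k) hc hred⟩
  rw [map_mul, map_mul, hc]

end Final
end IrrHopf

/-- Corollary 8.2: for a finite-dimensional irreducible Hopf
superalgebra `H` in characteristic `p > 2`, the following are equivalent:
(i) `H` is semisimple as an algebra;
(ii) `H` is purely even and commutative semisimple as an algebra;
(iii) the base extension of `H` to the algebraic closure is isomorphic (as a
Hopf algebra) to the function algebra of a finite `p`-group;
(iv) `P(H)` is purely even and is a torus (abelian, with every element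
generating a semisimple subalgebra). -/
theorem finiteDimensional_irreducible_semisimple_tfae
    (k : Type) [Field k] (p : ℕ) [CharP k p] (hp : 2 < p)
    (H : HopfSuperalgebra k) [FiniteDimensional k H.carrier]
    (hirr : H.IsIrreducible) :
    [ -- (i)
      IsSemisimpleRing H.carrier,
      -- (ii)
      H.IsPurelyEven ∧ (∀ a b : H.carrier, a * b = b * a) ∧ IsSemisimpleRing H.carrier,
      -- (iii)
      ∃ (G : Type) (_ : Group G) (_ : Fintype G), IsPGroup p G ∧
        ∃ e : ((AlgebraicClosure k) ⊗[k] H.carrier) ≃ₐ[AlgebraicClosure k]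
            (G → AlgebraicClosure k),
          (∀ (a : H.carrier) (g h : G) (n : ℕ) (x y : Fin n → H.carrier),
            H.comul a = ∑ i, x i ⊗ₜ[k] y i →
            e ((1 : AlgebraicClosure k) ⊗ₜ[k] a) (g * h) =
              ∑ i, e (1 ⊗ₜ[k] x i) g * e (1 ⊗ₜ[k] y i) h) ∧
          (∀ a : H.carrier,
            e ((1 : AlgebraicClosure k) ⊗ₜ[k] a) (1 : G) =
              algebraMap k (AlgebraicClosure k) (H.counit a)),
      -- (iv)
      (∀ u ∈ H.primitives, H.po u = 0) ∧
      (∀ u ∈ H.primitives, ∀ v ∈ H.primitives, u * v = v * u) ∧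
      (∀ u ∈ H.primitives,
        IsSemisimpleRing (Algebra.adjoin k ({u} : Set H.carrier))) ].TFAE := by
  have : Fact p.Prime := ⟨(CharP.char_is_prime_or_zero k p).resolve_right (by omega)⟩
  have hinj : Function.Injective
      (Algebra.TensorProduct.includeRight : H.carrier →ₐ[k] AlgebraicClosure k ⊗[k] H.carrier) :=
    Algebra.TensorProduct.includeRight_injective (algebraMap k (AlgebraicClosure k)).injective
  tfae_have 1 → 2 := fun h =>
    let ⟨he, hc, _, _⟩ := IrrHopf.structure_of_integral hirr
      IrrHopf.exists_integral_of_semisimple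
    ⟨he, hc, h⟩
  tfae_have 2 → 3 := fun ⟨_, _, _⟩ =>
    (IrrHopf.structure_of_integral hirr IrrHopf.exists_integral_of_semisimple).2.2.2
  tfae_have 3 → 1 := by
    rintro ⟨G, _, _, -, e, -, -⟩
    let f : H.carrier →ₐ[k] (G → AlgebraicClosure k) :=
      (e.toAlgHom.restrictScalars k).comp
        Algebra.TensorProduct.includeRight
    have hf : Function.Injective f := e.injective.comp hinj
    have : IsReduced H.carrier := isReduced_of_injective f hf
    exact IrrHopf.isSemisimpleRing_of_isReduced k fun x y => hf (by
      rw [map_mul, map_mul, mul_comm])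
  tfae_have 1 → 4 := fun _ => by
    obtain ⟨he, hc, hred, -⟩ := IrrHopf.structure_of_integral hirr
      IrrHopf.exists_integral_of_semisimple
    refine ⟨fun u _ => he u, fun u _ v _ => hc u v, fun u _ => ?_⟩
    have : IsReduced (Algebra.adjoin k ({u} : Set H.carrier)) :=
      isReduced_of_injective (Algebra.adjoin k ({u} : Set H.carrier)).val Subtype.val_injective
    exact IrrHopf.isSemisimpleRing_of_isReduced k fun x y => Subtype.ext (hc x y)
  tfae_have 4 → 1 := fun ⟨_, hc, hs⟩ => by
    obtain ⟨_, hc, hred, -⟩ := IrrHopf.structure_of_integral hirr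
      (IrrHopf.exists_integral_of_torus hc hs)
    exact IrrHopf.isSemisimpleRing_of_isReduced k hc
  tfae_finish

end
end

section
/- An irreducible Hopf superalgebra H over a field k of characteristic ≠ 2 is purely even if the Lie superalgebra P(H) of its primitive elements is purely even. -/
/-!
The comultiplication makes the linear dual of `H` act on `H` from both sides, by `x ↦ x₁ f(x₂)` and
`x ↦ f(x₁) x₂`; right coideals are the subspaces stable under the first action, and subcoalgebras
are those stable under both.

Irreducibility yields conilpotence. If `S` is a simple right coideal, the subcoalgebra it
generates is a sum of homomorphic images of `S` and contains the coradical `k·1`, which forces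
`S = k·1` (`simple_eq`). Every simple subquotient of `H` embeds in `H` through a matrix coefficient
map, so it is trivial as well (`rAct_mem_of_maximal`), and a composition series of a
finite-dimensional right coideal shows that each element of `H` is annihilated by a power of the
augmentation ideal `{g | g 1 = 0}` of the dual algebra (`exists_mem_filt`).

Let `Hₙ` be the subspace annihilated by the `n`-th power of this ideal. If `Hₙ` is purely even and
`y ∈ Hₙ₊₁` is odd, then `x ↦ x₁ g(x₂)` and `x ↦ g(x₁) x₂` with `g 1 = 0` send `y` to even
elements. Hence the odd-even component of `Δ y` is `y ⊗ 1` and the even-odd one is `1 ⊗ y`, so `y`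
is an odd primitive, which is zero by hypothesis. As `Hₙ₊₁` is a graded subspace, it is purely
even, and by induction so is `H = ⋃ Hₙ`. Only the graded coalgebra structure and the
unit enter the argument.
-/

open TensorProduct CategoryTheory

noncomputable section

namespace CoalgebraAux

variable {k M : Type} [Field k] [AddCommGroup M] [Module k M]

/-! ### Slicing tensors by functionals -/

/-- A tensor is determined by its slices along functionals in the second variable. -/
lemma ext_right {s t : M ⊗[k] M}
    (h : ∀ f : M →ₗ[k] k, TensorProduct.rid k M (f.lTensor M s) =
      TensorProduct.rid k M (f.lTensor M t)) : s = t := by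
  classical
  let b := Module.Basis.ofVectorSpace k M
  apply (TensorProduct.equivFinsuppOfBasisRight (M := M) b).injective
  ext i
  have key : ∀ t : M ⊗[k] M, TensorProduct.equivFinsuppOfBasisRight (M := M) b t i =
      TensorProduct.rid k M ((b.coord i).lTensor M t) := by
    intro t
    induction t using TensorProduct.induction_on with
    | zero => simp
    | tmul x y => simp
    | add x y hx hy => simp [hx, hy]
  rw [key, key, h]

/-- A tensor is determined by its slices along functionals in the first variable. -/
lemma ext_left {s t : M ⊗[k] M}
    (h : ∀ f : M →ₗ[k] k, TensorProduct.lid k M (f.rTensor M s) =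
      TensorProduct.lid k M (f.rTensor M t)) : s = t := by
  apply (TensorProduct.comm k M M).injective
  apply ext_right
  intro f
  have key : ∀ t : M ⊗[k] M, TensorProduct.rid k M (f.lTensor M (TensorProduct.comm k M M t)) =
      TensorProduct.lid k M (f.rTensor M t) := by
    intro t
    induction t using TensorProduct.induction_on with
    | zero => simp
    | tmul x y => simp
    | add x y hx hy => simp [hx, hy]
  rw [key, key, h]

lemma slice_left_fd (t : M ⊗[k] M) : ∃ V : Submodule k M, FiniteDimensional k V ∧
    ∀ f : M →ₗ[k] k, TensorProduct.lid k M (f.rTensor M t) ∈ V := by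
  induction t using TensorProduct.induction_on with
  | zero => exact ⟨⊥, inferInstance, by simp⟩
  | tmul x y =>
    refine ⟨k ∙ y, inferInstance, fun f => ?_⟩
    simpa using Submodule.smul_mem _ (f x) (Submodule.mem_span_singleton_self y)
  | add x y hx hy =>
    obtain ⟨V, hV, h⟩ := hx
    obtain ⟨W, hW, hw⟩ := hy
    refine ⟨V ⊔ W, inferInstance, fun f => ?_⟩
    simpa using Submodule.add_mem_sup (h f) (hw f)

lemma slice_right_fd (t : M ⊗[k] M) : ∃ V : Submodule k M, FiniteDimensional k V ∧
    ∀ f : M →ₗ[k] k, TensorProduct.rid k M (f.lTensor M t) ∈ V := by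
  induction t using TensorProduct.induction_on with
  | zero => exact ⟨⊥, inferInstance, by simp⟩
  | tmul x y =>
    refine ⟨k ∙ x, inferInstance, fun f => ?_⟩
    simpa using Submodule.smul_mem _ (f y) (Submodule.mem_span_singleton_self x)
  | add x y hx hy =>
    obtain ⟨V, hV, h⟩ := hx
    obtain ⟨W, hW, hw⟩ := hy
    refine ⟨V ⊔ W, inferInstance, fun f => ?_⟩
    simpa using Submodule.add_mem_sup (h f) (hw f)

/-! ### Extremal subspaces of finite-dimensional spaces -/

lemma exists_min_le (D : Submodule k M) [FiniteDimensional k D] (P : Submodule k M → Prop)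
    (hD : P D) : ∃ W ≤ D, P W ∧ ∀ W' ≤ W, P W' → W' = W := by
  obtain ⟨W, ⟨hWD, hW⟩, hmin⟩ := (measure fun W : Submodule k M => Module.finrank k W).wf.has_min
    {W | W ≤ D ∧ P W} ⟨D, le_rfl, hD⟩
  refine ⟨W, hWD, hW, fun W' hle hP => ?_⟩
  have : FiniteDimensional k W := Submodule.finiteDimensional_of_le hWD
  exact Submodule.eq_of_le_of_finrank_le hle (not_lt.1 (hmin W' ⟨hle.trans hWD, hP⟩))

lemma exists_max_le (D : Submodule k M) [FiniteDimensional k D] (P : Submodule k M → Prop)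
    (h0 : P ⊥) : ∃ W ≤ D, P W ∧ ∀ W', W ≤ W' → W' ≤ D → P W' → W' = W := by
  obtain ⟨W, ⟨hWD, hW⟩, hmin⟩ := (measure fun W : Submodule k M =>
    Module.finrank k D - Module.finrank k W).wf.has_min {W | W ≤ D ∧ P W} ⟨⊥, bot_le, h0⟩
  refine ⟨W, hWD, hW, fun W' hle hle' hP => ?_⟩
  have : FiniteDimensional k W' := Submodule.finiteDimensional_of_le hle'
  have h1 := Submodule.finrank_mono hle'
  have h2 : ¬ (Module.finrank k D - Module.finrank k W' < Module.finrank k D -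
    Module.finrank k W) := hmin W' ⟨hle', hP⟩
  exact (Submodule.eq_of_le_of_finrank_le hle (by
    have := Submodule.finrank_mono hWD
    omega)).symm

/-! ### The two actions of the dual algebra -/

variable [Coalgebra k M]

local notation "Δ" => (Coalgebra.comul : M →ₗ[k] M ⊗[k] M)

/-- The operator `x ↦ x₁ f(x₂)`. -/
def rAct (f : M →ₗ[k] k) : M →ₗ[k] M :=
  (TensorProduct.rid k M).toLinearMap ∘ₗ f.lTensor M ∘ₗ Δ

/-- The operator `x ↦ f(x₁) x₂`. -/
def lAct (f : M →ₗ[k] k) : M →ₗ[k] M :=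
  (TensorProduct.lid k M).toLinearMap ∘ₗ f.rTensor M ∘ₗ Δ

lemma rAct_apply (f : M →ₗ[k] k) (x : M) :
    rAct f x = TensorProduct.rid k M (f.lTensor M (Δ x)) := rfl

lemma lAct_apply (f : M →ₗ[k] k) (x : M) :
    lAct f x = TensorProduct.lid k M (f.rTensor M (Δ x)) := rfl

lemma rAct_counit (x : M) : rAct (Coalgebra.counit : M →ₗ[k] k) x = x := by
  simp [rAct_apply]

lemma lAct_counit (x : M) : lAct (Coalgebra.counit : M →ₗ[k] k) x = x := by
  simp [lAct_apply]

lemma rAct_add (f g : M →ₗ[k] k) (x : M) : rAct (f + g) x = rAct f x + rAct g x := by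
  simp [rAct_apply, LinearMap.lTensor_add]

lemma rAct_smul (c : k) (f : M →ₗ[k] k) (x : M) : rAct (c • f) x = c • rAct f x := by
  simp [rAct_apply, LinearMap.lTensor_smul]

lemma lAct_add (f g : M →ₗ[k] k) (x : M) : lAct (f + g) x = lAct f x + lAct g x := by
  simp [lAct_apply, LinearMap.rTensor_add]

lemma lAct_smul (c : k) (f : M →ₗ[k] k) (x : M) : lAct (c • f) x = c • lAct f x := by
  simp [lAct_apply, LinearMap.rTensor_smul]

/-- Both sides are `f(x₁) g(x₂)`. -/
lemma apply_rAct (f g : M →ₗ[k] k) (x : M) : f (rAct g x) = g (lAct f x) := by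
  rw [rAct_apply, lAct_apply]
  induction Δ x using TensorProduct.induction_on with
  | zero => simp
  | tmul x y => simp [mul_comm]
  | add x y hx hy => simp [hx, hy]

lemma counit_rAct (f : M →ₗ[k] k) (x : M) : (Coalgebra.counit (R := k) (rAct f x)) = f x := by
  rw [apply_rAct, lAct_counit]

lemma counit_lAct (f : M →ₗ[k] k) (x : M) : (Coalgebra.counit (R := k) (lAct f x)) = f x := by
  rw [← apply_rAct, rAct_counit]

lemma comul_rAct (f : M →ₗ[k] k) (x : M) : Δ (rAct f x) = (rAct f).lTensor M (Δ x) := by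
  have h := LinearMap.congr_fun (Coalgebra.coassoc (R := k) (A := M)) x
  simp only [LinearMap.comp_apply, LinearEquiv.coe_coe] at h
  have e : (rAct f).lTensor M (Δ x) =
      (TensorProduct.rid k M).toLinearMap.lTensor M ((f.lTensor M).lTensor M
        ((Δ).lTensor M (Δ x))) := by
    simp only [rAct, LinearMap.lTensor_comp, LinearMap.comp_apply]
  rw [e, ← h, rAct_apply]
  induction Δ x using TensorProduct.induction_on with
  | zero => simp
  | add x y hx hy => simp [hx, hy]
  | tmul x y =>
    simp only [LinearMap.lTensor_tmul, TensorProduct.rid_tmul, map_smul,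
      LinearMap.rTensor_tmul]
    induction Δ x using TensorProduct.induction_on with
    | zero => simp
    | add x y hx hy => simp [hx, hy, TensorProduct.add_tmul]
    | tmul a b => simp

lemma lAct_rAct (f g : M →ₗ[k] k) (x : M) : lAct g (rAct f x) = rAct f (lAct g x) := by
  rw [lAct_apply, comul_rAct, lAct_apply]
  induction Δ x using TensorProduct.induction_on with
  | zero => simp
  | tmul x y => simp
  | add x y hx hy => simp only [map_add, hx, hy]

lemma rAct_rAct (f g : M →ₗ[k] k) (x : M) : rAct g (rAct f x) = rAct (g ∘ₗ rAct f) x := by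
  rw [rAct_apply, comul_rAct, rAct_apply, LinearMap.lTensor_comp, LinearMap.comp_apply]

lemma lAct_lAct (f g : M →ₗ[k] k) (x : M) : lAct g (lAct f x) = lAct (g ∘ₗ lAct f) x := by
  rw [← sub_eq_zero, ← Module.forall_dual_apply_eq_zero_iff k]
  intro h
  rw [map_sub, sub_eq_zero]
  calc h (lAct g (lAct f x)) = g (rAct h (lAct f x)) := (apply_rAct _ _ _).symm
    _ = g (lAct f (rAct h x)) := by rw [lAct_rAct]
    _ = h (lAct (g ∘ₗ lAct f) x) := apply_rAct (g ∘ₗ lAct f) h x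

/-- A subspace stable under `rAct`, i.e. one with `Δ W ⊆ W ⊗ M`: a right coideal. -/
def RStable (W : Submodule k M) : Prop := ∀ f : M →ₗ[k] k, ∀ x ∈ W, rAct f x ∈ W

/-- A subspace stable under `lAct`, i.e. one with `Δ W ⊆ M ⊗ W`: a left coideal. -/
def LStable (W : Submodule k M) : Prop := ∀ f : M →ₗ[k] k, ∀ x ∈ W, lAct f x ∈ W

/-- A subspace that is both a left and a right coideal is a subcoalgebra, since
`(W ⊗ M) ∩ (M ⊗ W) = W ⊗ W`. -/
lemma isSubcoalgebra_of_stable {W : Submodule k M} (hR : RStable W) (hL : LStable W) :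
    IsSubcoalgebraOf Δ W := by
  intro a ha
  obtain ⟨p, hp⟩ := LinearMap.exists_leftInverse_of_injective W.subtype W.ker_subtype
  have hq : ∀ x ∈ W, W.subtype (p x) = x := fun x hx => by
    have := LinearMap.congr_fun hp ⟨x, hx⟩
    simp only [LinearMap.comp_apply, Submodule.subtype_apply, LinearMap.id_apply] at this
    simp [this]
  have h1 : (W.subtype ∘ₗ p).rTensor M (Δ a) = Δ a := by
    apply ext_right
    intro f
    have : ∀ t : M ⊗[k] M, TensorProduct.rid k M (f.lTensor M ((W.subtype ∘ₗ p).rTensor M t)) =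
        (W.subtype ∘ₗ p) (TensorProduct.rid k M (f.lTensor M t)) := by
      intro t
      induction t using TensorProduct.induction_on with
      | zero => simp
      | tmul x y => simp
      | add x y hx hy => simp only [map_add, hx, hy]
    rw [this]
    exact hq _ (hR f a ha)
  have h2 : (W.subtype ∘ₗ p).lTensor M (Δ a) = Δ a := by
    apply ext_left
    intro f
    have : ∀ t : M ⊗[k] M, TensorProduct.lid k M (f.rTensor M ((W.subtype ∘ₗ p).lTensor M t)) =
        (W.subtype ∘ₗ p) (TensorProduct.lid k M (f.rTensor M t)) := by
      intro t
      induction t using TensorProduct.induction_on with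
      | zero => simp
      | tmul x y => simp
      | add x y hx hy => simp only [map_add, hx, hy]
    rw [this]
    exact hq _ (hL f a ha)
  refine ⟨TensorProduct.map p p (Δ a), ?_⟩
  rw [← LinearMap.comp_apply, ← TensorProduct.map_comp]
  conv_rhs => rw [← h1, ← h2, ← LinearMap.comp_apply, LinearMap.rTensor_comp_lTensor]

lemma RStable.map_lAct {W : Submodule k M} (hW : RStable W) (f : M →ₗ[k] k) :
    RStable (W.map (lAct f)) := by
  rintro g _ ⟨x, hx, rfl⟩
  exact ⟨rAct g x, hW g x hx, lAct_rAct _ _ _⟩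

lemma RStable.comap_lAct {W : Submodule k M} (hW : RStable W) (f : M →ₗ[k] k) :
    RStable (W.comap (lAct f)) := by
  intro g x hx
  rw [Submodule.mem_comap, lAct_rAct]
  exact hW g _ hx

lemma RStable.sup {W W' : Submodule k M} (h : RStable W) (h' : RStable W') :
    RStable (W ⊔ W') := by
  intro g x hx
  obtain ⟨a, ha, b, hb, rfl⟩ := Submodule.mem_sup.1 hx
  rw [map_add]
  exact Submodule.add_mem_sup (h g a ha) (h' g b hb)

lemma RStable.inf {W W' : Submodule k M} (h : RStable W) (h' : RStable W') :
    RStable (W ⊓ W') := fun g x hx => ⟨h g x hx.1, h' g x hx.2⟩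

lemma rStable_bot : RStable (⊥ : Submodule k M) := by
  intro g x hx
  simp [(Submodule.mem_bot k).1 hx]

/-- Every element lies in a finite-dimensional right coideal. -/
lemma exists_rStable (x : M) : ∃ N : Submodule k M, FiniteDimensional k N ∧ RStable N ∧ x ∈ N := by
  obtain ⟨V, hV, h⟩ := slice_right_fd (Δ x)
  let N : Submodule k M :=
    { carrier := Set.range fun f : M →ₗ[k] k => rAct f x
      add_mem' := by
        rintro _ _ ⟨f, rfl⟩ ⟨g, rfl⟩
        exact ⟨f + g, rAct_add f g x⟩
      zero_mem' := ⟨0, by simp [rAct_apply]⟩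
      smul_mem' := by
        rintro c _ ⟨f, rfl⟩
        exact ⟨c • f, rAct_smul c f x⟩ }
  refine ⟨N, Submodule.finiteDimensional_of_le (S₂ := V) ?_, ?_, ⟨_, rAct_counit x⟩⟩
  · rintro _ ⟨f, rfl⟩
    exact h f
  · rintro g _ ⟨f, rfl⟩
    exact ⟨_, (rAct_rAct f g x).symm⟩

/-- The span of all `lAct f s` with `s ∈ S`. -/
def lSpan (S : Submodule k M) : Submodule k M := ⨆ f : M →ₗ[k] k, S.map (lAct f)

lemma lSpan_fd (S : Submodule k M) [FiniteDimensional k S] : FiniteDimensional k (lSpan S) := by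
  have hS : S.FG := (Submodule.fg_iff_finiteDimensional S).2 inferInstance
  have : ∃ V : Submodule k M, FiniteDimensional k V ∧ ∀ f : M →ₗ[k] k, S.map (lAct f) ≤ V := by
    induction S, hS using Submodule.fg_induction with
    | singleton x =>
      obtain ⟨V, hV, h⟩ := slice_left_fd (Δ x)
      refine ⟨V, hV, fun f => ?_⟩
      rw [Submodule.map_span_le]
      rintro _ rfl
      exact h f
    | sup N₁ N₂ h₁ h₂ i₁ i₂ =>
      obtain ⟨V, hV, h⟩ := i₁
      obtain ⟨W, hW, h'⟩ := i₂
      refine ⟨V ⊔ W, inferInstance, fun f => ?_⟩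
      rw [Submodule.map_sup]
      exact sup_le_sup (h f) (h' f)
  obtain ⟨V, hV, h⟩ := this
  exact Submodule.finiteDimensional_of_le (iSup_le h)

lemma le_lSpan (S : Submodule k M) : S ≤ lSpan S := fun x hx =>
  Submodule.mem_iSup_of_mem Coalgebra.counit ⟨x, hx, lAct_counit x⟩

lemma lSpan_lStable (S : Submodule k M) : LStable (lSpan S) := by
  intro g x hx
  suffices h : lSpan S ≤ (lSpan S).comap (lAct g) from h hx
  refine iSup_le fun f => ?_
  rintro _ ⟨s, hs, rfl⟩
  rw [Submodule.mem_comap, lAct_lAct]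
  exact Submodule.mem_iSup_of_mem _ ⟨s, hs, rfl⟩

lemma lSpan_rStable {S : Submodule k M} (hS : RStable S) : RStable (lSpan S) := by
  intro g x hx
  suffices h : lSpan S ≤ (lSpan S).comap (rAct g) from h hx
  refine iSup_le fun f => ?_
  rintro _ ⟨s, hs, rfl⟩
  exact Submodule.mem_iSup_of_mem f (hS.map_lAct f g _ ⟨s, hs, rfl⟩)

/-! ### Irreducible coalgebras are conilpotent -/

/-- In an irreducible coalgebra every nonzero finite-dimensional subcoalgebra contains `u`. -/
lemma mem_of_stable {u : M} (hirr : coradicalOf Δ = k ∙ u) {D : Submodule k M}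
    [FiniteDimensional k D] (hR : RStable D) (hL : LStable D) (h0 : D ≠ ⊥) : u ∈ D := by
  obtain ⟨W, hWD, ⟨hW, hW0⟩, hmin⟩ := exists_min_le D
    (fun W => IsSubcoalgebraOf Δ W ∧ W ≠ ⊥) ⟨isSubcoalgebra_of_stable hR hL, h0⟩
  have hle : W ≤ k ∙ u := by
    rw [← hirr]
    refine le_sSup ⟨hW, hW0, fun E hE hE' => ?_⟩
    by_cases h : E = ⊥
    · exact Or.inl h
    · exact Or.inr (hmin E hE ⟨hE', h⟩)
  obtain ⟨w, hw, hw0⟩ := Submodule.exists_mem_ne_zero_of_ne_bot hW0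
  obtain ⟨c, rfl⟩ := Submodule.mem_span_singleton.1 (hle hw)
  have hc : c ≠ 0 := fun h => hw0 (by simp [h])
  exact hWD ((Submodule.smul_mem_iff _ hc).1 hw)

lemma rAct_grouplike {u : M} (hu : Δ u = u ⊗ₜ u) (f : M →ₗ[k] k) : rAct f u = f u • u := by
  simp [rAct_apply, hu]

/-- Over an irreducible coalgebra the only simple right coideal is `k ∙ u`. The subcoalgebra
generated by a simple `S` is a sum of images `lAct f S` and contains `u`; comparing `k ∙ u`
with a right coideal of this subcoalgebra maximal among those avoiding `u` embeds `k ∙ u` in a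
copy of `S`, so functionals killing `u` act by zero on some nonzero vector of `S`. -/
lemma simple_eq {u : M} (hu : Δ u = u ⊗ₜ u) (hεu : Coalgebra.counit (R := k) u = 1)
    (hirr : coradicalOf Δ = k ∙ u) {S : Submodule k M} [FiniteDimensional k S]
    (hS : RStable S) (h0 : S ≠ ⊥) (hmin : ∀ W ≤ S, RStable W → W = ⊥ ∨ W = S)
    (g : M →ₗ[k] k) (hg : g u = 0) (x : M) (hx : x ∈ S) : rAct g x = 0 := by
  have := lSpan_fd S
  have huT : u ∈ lSpan S := mem_of_stable hirr (lSpan_rStable hS) (lSpan_lStable S)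
    (fun h => h0 (le_bot_iff.1 (h ▸ le_lSpan S)))
  have hu0 : u ≠ 0 := by
    rintro rfl
    simp at hεu
  obtain ⟨W, hWT, ⟨hW, huW⟩, hmax⟩ := exists_max_le (lSpan S) (fun W => RStable W ∧ u ∉ W)
    ⟨rStable_bot, by simpa using hu0⟩
  have hex : ∃ f : M →ₗ[k] k, ¬ S.map (lAct f) ≤ W := by
    by_contra! h
    exact huW (iSup_le h huT)
  obtain ⟨f, hf⟩ := hex
  -- every `s ∈ S` with `lAct f s ∈ W` is zero, by simplicity of `S`
  have hinj : ∀ s ∈ S, lAct f s ∈ W → s = 0 := by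
    intro s hs hsW
    rcases hmin (S ⊓ W.comap (lAct f)) inf_le_left (hS.inf (hW.comap_lAct f)) with h | h
    · have : s ∈ S ⊓ W.comap (lAct f) := ⟨hs, hsW⟩
      rw [h] at this
      simpa using this
    · exact absurd (Submodule.map_le_iff_le_comap.2 (inf_eq_left.1 h)) hf
  have huWS : u ∈ W ⊔ S.map (lAct f) := by
    by_contra hcon
    apply hf
    have := hmax (W ⊔ S.map (lAct f)) le_sup_left
      (sup_le hWT (le_iSup (fun f => S.map (lAct f)) f)) ⟨hW.sup (hS.map_lAct f), hcon⟩
    exact le_sup_right.trans this.le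
  obtain ⟨w, hw, _, ⟨s, hs, rfl⟩, hws⟩ := Submodule.mem_sup.1 huWS
  have hs0 : s ≠ 0 := by
    rintro rfl
    apply huW
    simpa [← hws] using hw
  have hkill : ∀ g : M →ₗ[k] k, g u = 0 → rAct g s = 0 := by
    intro g hg
    apply hinj _ (hS g s hs)
    have h1 : rAct g w + rAct g (lAct f s) = 0 := by
      rw [← map_add, hws, rAct_grouplike hu, hg, zero_smul]
    rw [lAct_rAct, eq_neg_of_add_eq_zero_right h1]
    exact W.neg_mem (hW g w hw)
  -- the vectors of `S` killed by the augmentation ideal form a nonzero right coideal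
  let K : Submodule k M := ⨅ g : {g : M →ₗ[k] k // g u = 0}, LinearMap.ker (rAct g.1)
  have hK : RStable K := by
    intro h y hy
    simp only [K, Submodule.mem_iInf, LinearMap.mem_ker, Subtype.forall] at hy ⊢
    intro g hg
    rw [rAct_rAct]
    apply hy
    rw [LinearMap.comp_apply, rAct_grouplike hu, map_smul, hg, smul_zero]
  rcases hmin (S ⊓ K) inf_le_left (hS.inf hK) with h | h
  · exfalso
    have : s ∈ S ⊓ K := ⟨hs, by simpa [K] using hkill⟩
    rw [h] at this
    exact hs0 (by simpa using this)
  · have := inf_eq_left.1 h hx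
    simp only [K, Submodule.mem_iInf, LinearMap.mem_ker, Subtype.forall] at this
    exact this g hg

/-- The filtration attached to a group-like `u`: `filt u n` is annihilated by all `n`-fold products
of functionals vanishing at `u`. When the coradical is `k ∙ u` this is the coradical filtration,
with indices shifted so that `filt u 0 = 0`. -/
def filt (u : M) : ℕ → Submodule k M
  | 0 => ⊥
  | n + 1 => ⨅ g : {g : M →ₗ[k] k // g u = 0}, (filt u n).comap (rAct g.1)

lemma mem_filt_succ {u : M} {n : ℕ} {x : M} :
    x ∈ filt (k := k) u (n + 1) ↔ ∀ g : M →ₗ[k] k, g u = 0 → rAct g x ∈ filt (k := k) u n := by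
  simp [filt]

/-- If `E ⊂ N` are right coideals with simple quotient, then `N / E` embeds in the coalgebra via
`lAct φ` for a functional `φ` vanishing on `E`, hence is trivial. -/
lemma rAct_mem_of_maximal {u : M} (hu : Δ u = u ⊗ₜ u) (hεu : Coalgebra.counit (R := k) u = 1)
    (hirr : coradicalOf Δ = k ∙ u) {E N : Submodule k M} [FiniteDimensional k N]
    (hN : RStable N) (hE : RStable E) (hEN : E ≤ N)
    (hmax : ∀ W, E ≤ W → W ≤ N → RStable W → W = E ∨ W = N)
    (g : M →ₗ[k] k) (hg : g u = 0) (x : M) (hx : x ∈ N) : rAct g x ∈ E := by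
  by_contra hcon
  obtain ⟨φ, hφ, hφE⟩ := Submodule.exists_le_ker_of_notMem hcon
  have hφE' : ∀ e ∈ E, lAct φ e = 0 := by
    intro e he
    rw [← Module.forall_dual_apply_eq_zero_iff k]
    intro f
    rw [← apply_rAct]
    exact hφE (hE f e he)
  have hne : lAct φ x ≠ 0 := by
    intro h
    apply hφ
    rw [apply_rAct, h, map_zero]
  have hzero : rAct g (lAct φ x) = 0 := by
    refine simple_eq hu hεu hirr (hN.map_lAct φ) ?_ ?_ g hg _ ⟨x, hx, rfl⟩
    · intro h
      have : lAct φ x ∈ N.map (lAct φ) := ⟨x, hx, rfl⟩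
      rw [h] at this
      exact hne (by simpa using this)
    · intro W hWN hW
      rcases hmax (N ⊓ W.comap (lAct φ)) (le_inf hEN fun e he => by
          simp [hφE' e he]) inf_le_left (hN.inf (hW.comap_lAct φ)) with h | h
      · left
        rw [eq_bot_iff]
        intro w hw
        obtain ⟨n, hn, rfl⟩ := hWN hw
        have : n ∈ N ⊓ W.comap (lAct φ) := ⟨hn, hw⟩
        rw [h] at this
        simp [hφE' n this]
      · right
        exact le_antisymm hWN (Submodule.map_le_iff_le_comap.2 (inf_eq_left.1 h))
  apply hφ
  rw [apply_rAct, ← counit_rAct, hzero, map_zero]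

/-- Irreducible coalgebras are conilpotent: the coradical filtration is exhaustive. -/
lemma exists_mem_filt {u : M} (hu : Δ u = u ⊗ₜ u) (hεu : Coalgebra.counit (R := k) u = 1)
    (hirr : coradicalOf Δ = k ∙ u) (x : M) : ∃ n, x ∈ filt (k := k) u n := by
  have key : ∀ n, ∀ N : Submodule k M, FiniteDimensional k N → RStable N →
      Module.finrank k N ≤ n → N ≤ filt (k := k) u n := by
    intro n
    induction n with
    | zero =>
      intro N _ _ h
      rw [Submodule.finrank_eq_zero.1 (Nat.le_zero.1 h)]
      exact bot_le
    | succ n ih =>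
      intro N hfd hN hfin
      by_cases h0 : N = ⊥
      · rw [h0]
        exact bot_le
      obtain ⟨E, hEN, ⟨hE, hne⟩, hmax⟩ := exists_max_le N (fun W => RStable W ∧ W ≠ N)
        ⟨rStable_bot, Ne.symm h0⟩
      have hEfd : FiniteDimensional k E := Submodule.finiteDimensional_of_le hEN
      have hlt := Submodule.finrank_lt_finrank_of_lt (lt_of_le_of_ne hEN hne)
      have hEF := ih E hEfd hE (by omega)
      intro x hx
      rw [mem_filt_succ]
      intro g hg
      refine hEF (rAct_mem_of_maximal hu hεu hirr hN hE hEN (fun W h1 h2 h3 => ?_) g hg x hx)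
      by_cases h : W = N
      · exact Or.inr h
      · exact Or.inl (hmax W h1 h2 ⟨h3, h⟩)
  obtain ⟨N, hfd, hN, hx⟩ := exists_rStable (k := k) x
  exact ⟨_, key _ N hfd hN le_rfl hx⟩

lemma eq_smul_counit_add {u : M} (hεu : Coalgebra.counit (R := k) u = 1) (f : M →ₗ[k] k) :
    ∃ g : M →ₗ[k] k, g u = 0 ∧ f = f u • Coalgebra.counit + g :=
  ⟨f - f u • Coalgebra.counit, by simp [hεu], by simp⟩

/-- `filt` is defined through the right action, but satisfies the same condition for the left one:
it is left-right symmetric. -/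
lemma lAct_mem_filt {u : M} (hεu : Coalgebra.counit (R := k) u = 1) (g : M →ₗ[k] k)
    (hg : g u = 0) (n : ℕ) (x : M) (hx : x ∈ filt (k := k) u (n + 1)) :
    lAct g x ∈ filt (k := k) u n := by
  induction n generalizing x with
  | zero =>
    have h0 : ∀ g : M →ₗ[k] k, g u = 0 → rAct g x = 0 := by
      simpa [filt] using mem_filt_succ.1 hx
    simp only [filt, Submodule.mem_bot]
    rw [← Module.forall_dual_apply_eq_zero_iff k]
    intro f
    obtain ⟨f', hf', hf⟩ := eq_smul_counit_add hεu f
    rw [← apply_rAct, hf, rAct_add, rAct_smul, rAct_counit, h0 f' hf', add_zero, map_smul,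
      ← counit_rAct g, h0 g hg, map_zero, smul_zero]
  | succ n ih =>
    rw [mem_filt_succ] at hx ⊢
    intro h hh
    rw [← lAct_rAct]
    exact ih _ (hx h hh)

end CoalgebraAux

namespace HopfSuperalgebra

open CoalgebraAux

/-! ### Parity and the coradical filtration -/

variable {k : Type} [Field k] (H : HopfSuperalgebra k)

/-- The coalgebra underlying a Hopf superalgebra. -/
@[reducible] def coalg : Coalgebra k H.carrier where
  comul := H.comul
  counit := H.counit
  coassoc := LinearMap.ext H.coassoc
  rTensor_counit_comp_comul := LinearMap.ext fun a => by
    apply (TensorProduct.lid k H.carrier).injective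
    simpa [LinearMap.rTensor] using H.counit_comul a
  lTensor_counit_comp_comul := LinearMap.ext fun a => by
    apply (TensorProduct.rid k H.carrier).injective
    simpa [LinearMap.lTensor] using H.comul_counit a

attribute [local instance] coalg

lemma po_po (a : H.carrier) : H.po (H.po a) = H.po a := by
  simpa [H.pe_po] using H.pe_add_po (H.po a)

lemma pe_pe (a : H.carrier) : H.pe (H.pe a) = H.pe a := by
  simpa [H.po_pe] using H.pe_add_po (H.pe a)

lemma pe_one : H.pe 1 = 1 := by
  simpa [H.one_even] using H.pe_add_po 1

lemma comul_po (a : H.carrier) : H.comul (H.po a) =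
    TensorProduct.map H.pe H.po (H.comul a) + TensorProduct.map H.po H.pe (H.comul a) := by
  have hpp : H.po ∘ₗ H.pe = 0 := LinearMap.ext H.po_pe
  have hqq : H.pe ∘ₗ H.po = 0 := LinearMap.ext H.pe_po
  have h1 : TensorProduct.map H.pe H.po (H.comul (H.pe a)) = 0 := by
    rw [H.comul_even _ (H.po_pe a), map_add]
    simp [TensorProduct.map_map, hpp, hqq]
  have h2 : TensorProduct.map H.po H.pe (H.comul (H.pe a)) = 0 := by
    rw [H.comul_even _ (H.po_pe a), map_add]
    simp [TensorProduct.map_map, hpp, hqq]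
  have h3 : H.comul a = H.comul (H.pe a) + H.comul (H.po a) := by
    rw [← map_add, H.pe_add_po]
  rw [h3, map_add, map_add, h1, h2, zero_add, zero_add, ← H.comul_odd _ (H.pe_po a)]

lemma rid_map (p q : H.carrier →ₗ[k] H.carrier) (f : H.carrier →ₗ[k] k)
    (t : H.carrier ⊗[k] H.carrier) :
    TensorProduct.rid k H.carrier (f.lTensor H.carrier (TensorProduct.map p q t)) =
      p (TensorProduct.rid k H.carrier ((f ∘ₗ q).lTensor H.carrier t)) := by
  induction t using TensorProduct.induction_on with
  | zero => simp
  | tmul x y => simp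
  | add x y hx hy => simp only [map_add, hx, hy]

lemma lid_map (p q : H.carrier →ₗ[k] H.carrier) (f : H.carrier →ₗ[k] k)
    (t : H.carrier ⊗[k] H.carrier) :
    TensorProduct.lid k H.carrier (f.rTensor H.carrier (TensorProduct.map p q t)) =
      q (TensorProduct.lid k H.carrier ((f ∘ₗ p).rTensor H.carrier t)) := by
  induction t using TensorProduct.induction_on with
  | zero => simp
  | tmul x y => simp
  | add x y hx hy => simp only [map_add, hx, hy]

/-- If one layer of the coradical filtration is purely even, the odd elements of the next layer
are primitive. -/
lemma mem_primitives_of_mem_filt {n : ℕ}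
    (hn : ∀ x ∈ filt (k := k) (1 : H.carrier) n, H.po x = 0) {y : H.carrier}
    (hy : y ∈ filt (k := k) (1 : H.carrier) (n + 1)) (hodd : H.pe y = 0) :
    y ∈ H.primitives := by
  have hyo : H.po y = y := by simpa [hodd] using H.pe_add_po y
  have hε : Coalgebra.counit (R := k) (1 : H.carrier) = 1 := H.counit_one
  have h1 : TensorProduct.map H.po LinearMap.id (H.comul y) = y ⊗ₜ 1 := by
    apply ext_right
    intro f
    rw [rid_map, LinearMap.comp_id]
    change H.po (rAct f y) = _
    obtain ⟨g, hg, hf⟩ := eq_smul_counit_add hε f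
    have hz := hn _ (mem_filt_succ.1 hy g hg)
    have : rAct f y = f 1 • y + rAct g y := by
      conv_lhs => rw [hf, rAct_add, rAct_smul, rAct_counit]
    rw [this, map_add, hz, map_smul, hyo]
    simp
  have h2 : TensorProduct.map LinearMap.id H.po (H.comul y) = 1 ⊗ₜ y := by
    apply ext_left
    intro f
    rw [lid_map, LinearMap.comp_id]
    change H.po (lAct f y) = _
    obtain ⟨g, hg, hf⟩ := eq_smul_counit_add hε f
    have hz := hn _ (lAct_mem_filt hε g hg n y hy)
    have : lAct f y = f 1 • y + lAct g y := by
      conv_lhs => rw [hf, lAct_add, lAct_smul, lAct_counit]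
    rw [this, map_add, hz, map_smul, hyo]
    simp
  have h3 : TensorProduct.map H.po H.pe (H.comul y) = y ⊗ₜ 1 := by
    have : TensorProduct.map H.po H.pe (H.comul y) =
        TensorProduct.map LinearMap.id H.pe
          (TensorProduct.map H.po LinearMap.id (H.comul y)) := by
      rw [TensorProduct.map_map, LinearMap.id_comp, LinearMap.comp_id]
    rw [this, h1]
    simp [H.pe_one]
  have h4 : TensorProduct.map H.pe H.po (H.comul y) = 1 ⊗ₜ y := by
    have : TensorProduct.map H.pe H.po (H.comul y) =
        TensorProduct.map H.pe LinearMap.id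
          (TensorProduct.map LinearMap.id H.po (H.comul y)) := by
      rw [TensorProduct.map_map, LinearMap.id_comp, LinearMap.comp_id]
    rw [this, h2]
    simp [H.pe_one]
  have h5 := H.comul_odd y hodd
  rw [h3, h4] at h5
  simp [primitives, h5]

lemma filt_even (hprim : ∀ u ∈ H.primitives, H.po u = 0) (n : ℕ) :
    ∀ x ∈ filt (k := k) (1 : H.carrier) n, H.po x = 0 := by
  induction n with
  | zero =>
    intro x hx
    simp [(Submodule.mem_bot k).1 hx]
  | succ n ih =>
    intro x hx
    rw [← H.po_po]
    refine hprim _ (H.mem_primitives_of_mem_filt ih ?_ (H.pe_po x))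
    rw [mem_filt_succ] at hx ⊢
    intro g hg
    have e : rAct g (H.po x) = H.pe (rAct (g ∘ₗ H.po) x) + H.po (rAct (g ∘ₗ H.pe) x) := by
      rw [rAct_apply]
      change TensorProduct.rid k H.carrier (g.lTensor H.carrier (H.comul (H.po x))) = _
      rw [comul_po, map_add, map_add, rid_map, rid_map]
      rfl
    have m1 := hx (g ∘ₗ H.po) (by simp [H.one_even])
    have m2 := hx (g ∘ₗ H.pe) (by simp [H.pe_one, hg])
    have m3 : H.pe (rAct (g ∘ₗ H.po) x) = rAct (g ∘ₗ H.po) x := by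
      simpa [ih _ m1] using H.pe_add_po (rAct (g ∘ₗ H.po) x)
    rw [e, ih _ m2, m3, add_zero]
    exact m1

end HopfSuperalgebra

/-- Lemma 7.1: an irreducible Hopf superalgebra over a field
of characteristic `≠ 2` is purely even if the Lie superalgebra `P(H)` of its
primitive elements is purely even. -/
theorem irreducible_hopfSuperalgebra_purelyEven_of_primitives_even
    (k : Type) [Field k] (hchar : ringChar k ≠ 2)
    (H : HopfSuperalgebra k) (hirr : H.IsIrreducible)
    (hprim : ∀ u ∈ H.primitives, H.po u = 0) :
    H.IsPurelyEven := by
  let := H.coalg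
  intro a
  obtain ⟨n, hn⟩ := CoalgebraAux.exists_mem_filt (k := k) (u := (1 : H.carrier))
    H.comul_one H.counit_one hirr a
  exact H.filt_even hprim n a hn

end
end
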